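/- (Toeplitz-corona theorem on the bidisk) Let φ₁,…,φ_N be bounded analytic functions on 𝔻² and let δ > 0. The following are equivalent: (i) for every admissible kernel k on 𝔻², the function (ζ,λ) ↦ [∑_{i=1}^N φ_i(ζ) \overline{φ_i(λ)} − δ] k(ζ,λ) is positive semi-definite on 𝔻² × 𝔻²; (ii) there exist bounded analytic functions ψ₁,…,ψ_N on 𝔻² such that ∑_{i=1}^N ψ_i(λ) φ_i(λ) = 1 for all λ ∈ 𝔻² and sup_{λ∈𝔻²} ∑_{i=1}^N |ψ_i(λ)|² ≤ 1/δ. -/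

import Mathlib

open Finset
open scoped ComplexOrder

/-- The open bidisk in `ℂ × ℂ`. -/
def Bidisk : Set (ℂ × ℂ) := {lam : ℂ × ℂ | ‖lam.1‖ < 1 ∧ ‖lam.2‖ < 1}

/-- A kernel on the bidisk is positive semi-definite if all its finite Gram sums over
points of `𝔻²` are nonnegative. -/
def IsPSDKernel (k : ℂ × ℂ → ℂ × ℂ → ℂ) : Prop :=
  ∀ (n : ℕ) (mu : Fin n → ℂ × ℂ), (∀ i, mu i ∈ Bidisk) → ∀ a : Fin n → ℂ,
    0 ≤ ∑ i, ∑ j, a i * starRingEnd ℂ (a j) * k (mu i) (mu j)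

/-- A kernel `k` on `𝔻²` is admissible if `k` and both kernels
`(ζ,λ) ↦ (1 - ζʳ λ̄ʳ) k(ζ,λ)`, `r = 1, 2`, are positive semi-definite. -/
def IsAdmissibleKernel (k : ℂ × ℂ → ℂ × ℂ → ℂ) : Prop :=
  IsPSDKernel k ∧
  IsPSDKernel (fun zeta lam => (1 - zeta.1 * starRingEnd ℂ lam.1) * k zeta lam) ∧
  IsPSDKernel (fun zeta lam => (1 - zeta.2 * starRingEnd ℂ lam.2) * k zeta lam)

/-!
Write `M(ζ, λ) = ∑ᵢ φᵢ(ζ) conj φᵢ(λ) - δ`.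

For (i) ⇒ (ii), condition (i) says that `M` is nonnegative on the dual of the cone of kernels
`G₀ + (1 - ζ₁ λ̄₁) G₁ + (1 - ζ₂ λ̄₂) G₂` with `Gᵣ` positive semidefinite. This cone is closed, so by
Hahn–Banach separation `M` lies in it. Reading such a decomposition of `M` as an inequality of Gram
matrices gives a contractive colligation `V` (lurking isometry), and the transfer function of `V`
at the operator `ζ₁ ⊕ ζ₂`, divided by `√δ`, is the row `ψ`.

For (ii) ⇒ (i), an admissible kernel is the Gram matrix of vectors `u z`, and on the span of
finitely many of them there are commuting contractions `S, T` with joint eigenvectors `u z` and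
eigenvalues `z₁, z₂`. Andô's theorem dilates `(S, T)` to commuting unitaries. These generate a
commutative C*-algebra, in which the row `ψ(r ·)`, `|r| < 1`, is defined by a double Cauchy integral
and has norm at most `δ ^ (-1/2)`, since it does at every character. Compressing and letting
`r → 1` bounds the row `ψ(S, T)`, which is the positivity of `M k` because `∑ᵢ ψᵢ φᵢ = 1`.
-/

open Matrix (gram)
open scoped ComplexConjugate InnerProductSpace Matrix Topology

section GramMatrices

universe u

variable {X : Type u} {P Q : Type*} [NormedAddCommGroup P] [InnerProductSpace ℂ P]
  [NormedAddCommGroup Q] [InnerProductSpace ℂ Q]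

lemma finsupp_sum_gram (f : X → P) (c : X →₀ ℂ) :
    (c.sum fun x a => c.sum fun y b => star a * gram ℂ f x y * b) =
      (‖Finsupp.linearCombination ℂ f c‖ ^ 2 : ℝ) := by
  rw [Complex.ofReal_pow]
  refine Eq.trans ?_ (inner_self_eq_norm_sq_to_K (𝕜 := ℂ) (Finsupp.linearCombination ℂ f c))
  simp only [Finsupp.linearCombination_apply, Finsupp.sum, Matrix.gram_apply, sum_inner, inner_sum,
    inner_smul_right, inner_smul_left, RCLike.star_def, Finset.mul_sum]
  rw [Finset.sum_comm]
  exact Finset.sum_congr rfl fun x _ => Finset.sum_congr rfl fun y _ => by ring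

lemma posSemidef_gram_sub_gram_iff {f : X → P} {g : X → Q} :
    (gram ℂ f - gram ℂ g).PosSemidef ↔
      ∀ c, ‖Finsupp.linearCombination ℂ g c‖ ≤ ‖Finsupp.linearCombination ℂ f c‖ := by
  have hsum (c : X →₀ ℂ) :
      (c.sum fun x a => c.sum fun y b => star a * (gram ℂ f - gram ℂ g) x y * b) =
        (‖Finsupp.linearCombination ℂ f c‖ ^ 2 - ‖Finsupp.linearCombination ℂ g c‖ ^ 2 : ℝ) := by
    rw [Complex.ofReal_sub, ← finsupp_sum_gram, ← finsupp_sum_gram]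
    simp only [Finsupp.sum, Matrix.sub_apply, mul_sub, sub_mul, Finset.sum_sub_distrib]
  have hherm := (Matrix.isHermitian_gram ℂ f).sub (Matrix.isHermitian_gram ℂ g)
  simp only [Matrix.PosSemidef, hherm, true_and, hsum, Complex.zero_le_real, sub_nonneg,
    sq_le_sq₀ (norm_nonneg _) (norm_nonneg _)]

lemma gram_posSemidef (f : X → P) : (gram ℂ f).PosSemidef :=
  ⟨Matrix.isHermitian_gram ℂ f, fun c => by
    rw [finsupp_sum_gram, Complex.zero_le_real]; positivity⟩

lemma exists_gram_eq {k : Matrix X X ℂ} (hk : k.PosSemidef) :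
    ∃ (H : Type u) (_ : NormedAddCommGroup H) (_ : InnerProductSpace ℂ H) (_ : CompleteSpace H)
      (u : X → H), gram ℂ u = k := by
  let K : Matrix X X (ℂ →L[ℂ] ℂ) := k.map fun a => a • ContinuousLinearMap.id ℂ ℂ
  have hK : K.PosSemidef := by
    refine ((RKHS.posSemidef_tfae (K := K)).out 0 2).2 (And.intro ?_ fun c => ?_)
    · ext x y
      have : star (k y x) = k x y := hk.1.apply x y
      simp [K, ← this, ContinuousLinearMap.star_eq_adjoint, ContinuousLinearMap.adjoint_id]
    · have := (Complex.le_def.1 (hk.2 c)).1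
      refine this.trans_eq (congrArg _ ?_)
      refine Finset.sum_congr rfl fun x _ => Finset.sum_congr rfl fun y _ => ?_
      have : (starRingEnd ℂ) (k y x) = k x y := hk.1.apply x y
      simp [K, this]
      ring
  have : Fact K.PosSemidef := ⟨hK⟩
  refine ⟨RKHS.OfKernel K, inferInstance, inferInstance, inferInstance,
    fun x => RKHS.kerFun (RKHS.OfKernel K) x 1, ?_⟩
  ext x y
  have := RKHS.kernel_inner (RKHS.OfKernel K) y x (1 : ℂ) (1 : ℂ)
  rw [RKHS.OfKernel.kernel_ofKernel] at this
  rw [Matrix.gram_apply, ← this]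
  simpa [K] using hk.1.apply x y

lemma exists_contraction_of_norm_le {E : Type*} [AddCommGroup E] [Module ℂ E] [CompleteSpace P]
    [CompleteSpace Q] {f : E →ₗ[ℂ] P} {g : E →ₗ[ℂ] Q} (h : ∀ c, ‖g c‖ ≤ ‖f c‖) :
    ∃ V : P →L[ℂ] Q, ‖V‖ ≤ 1 ∧ ∀ c, V (f c) = g c := by
  let S := (LinearMap.range f).topologicalClosure
  have : CompleteSpace S := (Submodule.isClosed_topologicalClosure _).completeSpace_coe
  let e : E →ₗ[ℂ] S := f.codRestrict S fun c =>
    (LinearMap.range f).le_topologicalClosure (LinearMap.mem_range_self f c)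
  have he : DenseRange e := by
    rw [DenseRange, Subtype.dense_iff]
    intro p hp
    rwa [← Set.range_comp]
  have hge (c) : ‖g c‖ ≤ 1 * ‖e c‖ := by simpa [e] using h c
  refine ⟨g.extendOfNorm e ∘L S.orthogonalProjectionOnto, ?_, fun c => ?_⟩
  · exact (ContinuousLinearMap.opNorm_comp_le _ _).trans (mul_le_one₀
      (LinearMap.opNorm_extendOfNorm_le he zero_le_one hge) (norm_nonneg _)
      S.orthogonalProjectionOnto_norm_le)
  · have : S.orthogonalProjectionOnto (f c) = e c :=
      S.orthogonalProjectionOnto_mem_subspace_eq_self (e c)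
    rw [ContinuousLinearMap.comp_apply, this]
    exact LinearMap.extendOfNorm_eq he ⟨1, hge⟩ c

lemma exists_contraction_of_posSemidef_gram_sub_gram [CompleteSpace P] [CompleteSpace Q]
    {f : X → P} {g : X → Q} (h : (gram ℂ f - gram ℂ g).PosSemidef) :
    ∃ V : P →L[ℂ] Q, ‖V‖ ≤ 1 ∧ ∀ x, V (f x) = g x := by
  obtain ⟨V, hV, hVfg⟩ := exists_contraction_of_norm_le (posSemidef_gram_sub_gram_iff.1 h)
  exact ⟨V, hV, fun x => by simpa using hVfg (Finsupp.single x 1)⟩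

end GramMatrices
section SchurCone

open Filter

variable {X ι : Type*}

lemma norm_apply_le_of_posSemidef {k : Matrix X X ℂ} (hk : k.PosSemidef) {r : ℝ} {x y : X}
    (hx : (k x x).re ≤ r) (hy : (k y y).re ≤ r) : ‖k x y‖ ≤ r := by
  obtain ⟨H, _, _, _, u, rfl⟩ := exists_gram_eq hk
  simp only [Matrix.gram_apply, ← RCLike.re_eq_complex_re, inner_self_eq_norm_sq] at hx hy
  have := norm_inner_le_norm (𝕜 := ℂ) (u x) (u y)
  rw [Matrix.gram_apply]
  nlinarith [sq_nonneg (‖u x‖ - ‖u y‖)]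

lemma isClosed_setOf_posSemidef : IsClosed {k : Matrix X X ℂ | k.PosSemidef} := by
  simp only [Matrix.PosSemidef, Set.ofPred_and, Set.ofPred_forall]
  refine (isClosed_eq (by fun_prop) continuous_id).inter
    (isClosed_iInter fun c => isClosed_le continuous_const ?_)
  refine continuous_finsetSum _ fun x _ => continuous_finsetSum _ fun y _ => ?_
  exact (continuous_const.mul (continuous_id.matrix_elem x y)).mul continuous_const

lemma exists_tendsto_of_eventually_diag_le {α : Type*} (𝒰 : Ultrafilter α)
    {k : α → Matrix X X ℂ} (hk : ∀ a, (k a).PosSemidef)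
    (hdiag : ∀ x, ∃ B : ℝ, ∀ᶠ a in (𝒰 : Filter α), (k a x x).re ≤ B) :
    ∃ l, Tendsto k 𝒰 (𝓝 l) := by
  have hlim (x y : X) : ∃ l, Tendsto (fun a => k a x y) 𝒰 (𝓝 l) := by
    obtain ⟨B, hB⟩ := hdiag x
    obtain ⟨B', hB'⟩ := hdiag y
    obtain ⟨l, -, hl⟩ := (isCompact_closedBall (0 : ℂ) (max B B')).ultrafilter_le_nhds
      (𝒰.map fun a => k a x y) (by
        rw [le_principal_iff, Ultrafilter.coe_map, Filter.mem_map]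
        filter_upwards [hB, hB'] with a ha ha'
        exact mem_closedBall_zero_iff.2 (norm_apply_le_of_posSemidef (hk a)
          (ha.trans (le_max_left _ _)) (ha'.trans (le_max_right _ _))))
    exact ⟨l, hl⟩
  choose l hl using hlim
  exact ⟨Matrix.of l, tendsto_pi_nhds.2 fun x => tendsto_pi_nhds.2 fun y => hl x y⟩

variable [Fintype ι]

/-- The convex cone of kernels of the form `∑ i, m i ⊙ G i` with every `G i` positive
semidefinite. -/
def schurCone (m : ι → Matrix X X ℂ) : PointedCone ℝ (Matrix X X ℂ) where
  carrier := {A | ∃ G : ι → Matrix X X ℂ, (∀ i, (G i).PosSemidef) ∧ ∑ i, m i ⊙ G i = A}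
  zero_mem' := ⟨0, fun _ => .zero, by simp⟩
  add_mem' := by
    rintro _ _ ⟨G, hG, rfl⟩ ⟨G', hG', rfl⟩
    exact ⟨G + G', fun i => (hG i).add (hG' i), by
      simp [Matrix.hadamard_add, Finset.sum_add_distrib]⟩
  smul_mem' := by
    rintro r _ ⟨G, hG, rfl⟩
    exact ⟨fun i => r.1 • G i, fun i => (hG i).smul r.2, by
      simp only [Matrix.hadamard_smul, ← Finset.smul_sum]; rfl⟩

lemma hadamard_mem_schurCone (m : ι → Matrix X X ℂ) (i : ι) {G : Matrix X X ℂ}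
    (hG : G.PosSemidef) : m i ⊙ G ∈ schurCone m := by
  classical
  refine ⟨Pi.single i G, fun j => ?_, ?_⟩
  · obtain rfl | h := eq_or_ne j i
    · simpa
    · simpa [h] using Matrix.PosSemidef.zero
  · rw [Finset.sum_eq_single i (fun j _ h => by simp [h]) (by simp), Pi.single_eq_same]

lemma re_apply_self_le_of_sum_hadamard {m G : ι → Matrix X X ℂ} {x : X} (hm : ∀ i, 0 < m i x x)
    (hG : ∀ i, (G i).PosSemidef) {r : ℝ} (hr : ((∑ i, m i ⊙ G i) x x).re ≤ r) (i : ι) :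
    (G i x x).re ≤ r / (m i x x).re := by
  have hmi : 0 < (m i x x).re := (Complex.lt_def.1 (hm i)).1
  have hGm (j) : 0 ≤ m j x x * G j x x := mul_nonneg (hm j).le (hG j).diag_nonneg
  rw [le_div_iff₀' hmi]
  have h1 := (Complex.le_def.1
    (Finset.single_le_sum (fun j _ => hGm j) (Finset.mem_univ i))).1
  have him : (m i x x).im = 0 := (Complex.lt_def.1 (hm i)).2.symm
  simp only [Matrix.sum_apply, Matrix.hadamard_apply] at hr
  simp only [Complex.mul_re, him, zero_mul, sub_zero] at h1
  exact h1.trans hr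

lemma isClosed_schurCone {m : ι → Matrix X X ℂ} (hm : ∀ i x, 0 < m i x x) :
    IsClosed (schurCone m : Set (Matrix X X ℂ)) := by
  let S : Set (ι → Matrix X X ℂ) := {G | ∀ i, (G i).PosSemidef}
  have hS : IsClosed S := by
    simp only [S, Set.ofPred_forall]
    exact isClosed_iInter fun i => isClosed_setOf_posSemidef.preimage
      (continuous_apply (A := fun _ => Matrix X X ℂ) i)
  let Φ (G : S) : Matrix X X ℂ := ∑ i, m i ⊙ G.1 i
  -- A bound on the diagonal of `∑ i, m i ⊙ G i` bounds every `G i`, as `m i` is positive there.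
  suffices IsProperMap Φ by
    convert this.isClosedMap.isClosed_range
    ext A
    simp [schurCone, Φ, S]
  have hΦ : Continuous Φ := by
    refine continuous_finsetSum _ fun i _ => continuous_matrix fun x y => ?_
    simp only [Matrix.hadamard_apply]
    exact continuous_const.mul
      (((continuous_apply i).comp continuous_subtype_val).matrix_elem x y)
  refine isProperMap_iff_ultrafilter.2 ⟨hΦ, fun 𝒰 A hA => ?_⟩
  have hdiag (i : ι) (x : X) : ∃ B : ℝ, ∀ᶠ G in (𝒰 : Filter S), (G.1 i x x).re ≤ B := by
    have hre : Tendsto (fun G => (Φ G x x).re) 𝒰 (𝓝 (A x x).re) :=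
      ((Complex.continuous_re.comp (continuous_id.matrix_elem x x)).tendsto A).comp hA
    refine ⟨((A x x).re + 1) / (m i x x).re, ?_⟩
    filter_upwards [hre.eventually_le_const (lt_add_one _)] with G hG
    exact re_apply_self_le_of_sum_hadamard (fun j => hm j x) G.2 hG i
  choose L hL using fun i =>
    exists_tendsto_of_eventually_diag_le 𝒰 (fun G : S => G.2 i) (hdiag i)
  have hL' : Tendsto Subtype.val (𝒰 : Filter S) (𝓝 L) := tendsto_pi_nhds.2 hL
  have hLS : L ∈ S := hS.mem_of_tendsto hL' (Eventually.of_forall fun G => G.2)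
  have hle : (𝒰 : Filter S) ≤ 𝓝 ⟨L, hLS⟩ := tendsto_subtype_rng.2 hL'
  exact ⟨⟨L, hLS⟩, tendsto_nhds_unique (hΦ.continuousAt.mono_left hle) hA, hle⟩

lemma tendsto_hadamard_indicator (A : Matrix X X ℂ) :
    Tendsto (fun s : Finset X => A ⊙ gram ℂ (Finsupp.indicator s fun _ _ => (1 : ℂ)))
      atTop (𝓝 A) := by
  classical
  refine tendsto_pi_nhds.2 fun x => tendsto_pi_nhds.2 fun y => tendsto_const_nhds.congr' ?_
  filter_upwards [eventually_ge_atTop {x, y}] with s hs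
  have hx : x ∈ s := hs (by simp)
  have hy : y ∈ s := hs (by simp)
  simp [hx, hy]

/-- The Hermitian kernel representing a real functional `f` on Hermitian matrices, normalised so
that `2 f A = ∑ x, ∑ y, A x y * dualKernel f x y` when `A` is finitely supported. -/
noncomputable def dualKernel [DecidableEq X] (f : StrongDual ℝ (Matrix X X ℂ)) : Matrix X X ℂ :=
  let F := f.extendRCLike (𝕜 := ℂ)
  Matrix.of fun x y => F (Matrix.single x y 1) + star (F (Matrix.single y x 1))

lemma isHermitian_dualKernel [DecidableEq X] (f : StrongDual ℝ (Matrix X X ℂ)) :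
    (dualKernel f).IsHermitian := by
  ext x y
  simp [dualKernel, add_comm]

lemma finsupp_sum_hadamard_dualKernel [DecidableEq X] (f : StrongDual ℝ (Matrix X X ℂ))
    {A : Matrix X X ℂ} (hA : A.IsHermitian) (c : X →₀ ℂ) :
    (c.sum fun x a => c.sum fun y b => star a * (A ⊙ dualKernel f) x y * b) =
      (2 * f (A ⊙ gram ℂ c) : ℝ) := by
  set B : Matrix X X ℂ := A ⊙ gram ℂ c with hB
  set F := f.extendRCLike (𝕜 := ℂ) with hF
  have hBherm (x y) : star (B x y) = B y x := by
    rw [hB, hA.hadamard (Matrix.isHermitian_gram ℂ c) |>.apply]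
  have hBsum : B = ∑ x ∈ c.support, ∑ y ∈ c.support, B x y • Matrix.single x y 1 := by
    ext x y
    simp only [Matrix.sum_apply, Matrix.smul_apply, Matrix.single_apply, smul_eq_mul]
    rw [Finset.sum_eq_single x, Finset.sum_eq_single y] <;> simp +contextual [hB]
  have hFB : F B = ∑ x ∈ c.support, ∑ y ∈ c.support, B x y * F (Matrix.single x y 1) := by
    conv_lhs => rw [hBsum]
    simp only [map_sum, map_smul, smul_eq_mul]
  have hFB' : star (F B) =
      ∑ x ∈ c.support, ∑ y ∈ c.support, B x y * star (F (Matrix.single y x 1)) := by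
    rw [hFB, Finset.sum_comm]
    simp only [star_sum, star_mul', hBherm]
  calc _ = F B + star (F B) := by
        rw [hFB', hFB]
        simp only [Finsupp.sum, ← Finset.sum_add_distrib]
        refine Finset.sum_congr rfl fun x _ => Finset.sum_congr rfl fun y _ => ?_
        simp only [hB, dualKernel, Matrix.hadamard_apply, Matrix.of_apply, ← hF, Matrix.gram_apply,
          RCLike.inner_apply, Complex.star_def]
        ring
    _ = (2 * f B : ℝ) := by
        rw [Complex.star_def, Complex.add_conj, ← RCLike.re_eq_complex_re, hF,
          StrongDual.re_extendRCLike_apply]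

lemma mem_schurCone_of_forall_posSemidef {m : ι → Matrix X X ℂ} (hm : ∀ i x, 0 < m i x x)
    (hmh : ∀ i, (m i).IsHermitian) {M : Matrix X X ℂ} (hM : M.IsHermitian)
    (h : ∀ κ : Matrix X X ℂ, (∀ i, (m i ⊙ κ).PosSemidef) → (M ⊙ κ).PosSemidef) :
    M ∈ schurCone m := by
  classical
  by_contra hMC
  have : LocallyConvexSpace ℝ (Matrix X X ℂ) := inferInstanceAs (LocallyConvexSpace ℝ (X → X → ℂ))
  let C : ProperCone ℝ (Matrix X X ℂ) := ⟨schurCone m, isClosed_schurCone hm⟩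
  obtain ⟨f, hfC, hfM⟩ := C.hyperplane_separation_point hMC
  have hκ (i) : (m i ⊙ dualKernel f).PosSemidef := by
    refine ⟨(hmh i).hadamard (isHermitian_dualKernel f), fun c => ?_⟩
    rw [finsupp_sum_hadamard_dualKernel f (hmh i), Complex.zero_le_real]
    exact mul_nonneg zero_le_two (hfC _ (hadamard_mem_schurCone m i (gram_posSemidef c)))
  -- `f M` is the limit of `f` on the finite truncations of `M`, which `dualKernel f` represents.
  refine hfM.not_ge (ge_of_tendsto' ((f.continuous.tendsto M).comp
    (tendsto_hadamard_indicator M)) fun s => ?_)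
  have := (h _ hκ).2 (Finsupp.indicator s fun _ _ => 1)
  rw [finsupp_sum_hadamard_dualKernel f hM, Complex.zero_le_real] at this
  simpa using this

end SchurCone

section TransferFunction

open ContinuousLinearMap (fst snd inl inr)

variable {U W H : Type*} [NormedAddCommGroup U] [InnerProductSpace ℂ U] [NormedAddCommGroup W]
  [InnerProductSpace ℂ W] [NormedAddCommGroup H] [InnerProductSpace ℂ H]

/-- The transfer function `A + B Z (1 - D Z)⁻¹ C` of the colligation `V = [A B; C D]`, evaluated
at an operator `Z` on the state space. It is a junk value unless `1 - D Z` is invertible. -/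
noncomputable def transferFunction (V : U × H →L[ℂ] W × H) (Z : H →L[ℂ] H) : U →L[ℂ] W :=
  let state : U →L[ℂ] H := Ring.inverse (1 - snd ℂ W H ∘L V ∘L inr ℂ U H ∘L Z) ∘L
    snd ℂ W H ∘L V ∘L inl ℂ U H
  fst ℂ W H ∘L V ∘L (inl ℂ U H + inr ℂ U H ∘L Z ∘L state)

/-- A colligation is contractive if it is a contraction for the Hilbert space norms on the
products `U × H` and `W × H`, whose built-in norms are sup norms. -/
def IsContractiveColligation (V : U × H →L[ℂ] W × H) : Prop :=
  ∀ p, ‖(V p).1‖ ^ 2 + ‖(V p).2‖ ^ 2 ≤ ‖p.1‖ ^ 2 + ‖p.2‖ ^ 2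

variable {V : U × H →L[ℂ] W × H} (hV : IsContractiveColligation V)
  {Z : H →L[ℂ] H} (hZ : ‖Z‖ < 1)

include hV

lemma norm_snd_apply_zero_le (h : H) : ‖(V (0, h)).2‖ ≤ ‖h‖ := by
  have := hV (0, h)
  simp only [norm_zero] at this
  exact le_of_sq_le_sq (by nlinarith [sq_nonneg ‖(V (0, h)).1‖]) (norm_nonneg h)

include hZ

lemma isUnit_one_sub_of_contraction [CompleteSpace H] :
    IsUnit (1 - snd ℂ W H ∘L V ∘L inr ℂ U H ∘L Z) := by
  refine isUnit_one_sub_of_norm_lt_one (lt_of_le_of_lt ?_ hZ)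
  refine ContinuousLinearMap.opNorm_le_bound _ (norm_nonneg Z) fun h => ?_
  exact (norm_snd_apply_zero_le hV (Z h)).trans (Z.le_opNorm h)

lemma exists_state_transferFunction [CompleteSpace H] (u : U) :
    ∃ h, V (u, Z h) = (transferFunction V Z u, h) := by
  set T := 1 - snd ℂ W H ∘L V ∘L inr ℂ U H ∘L Z with hT
  set h : H := Ring.inverse T (V (u, 0)).2 with hh
  have hTh : T h = (V (u, 0)).2 := by
    rw [hh, ← mul_apply_eq_comp,
      Ring.mul_inverse_cancel _ (isUnit_one_sub_of_contraction hV hZ),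
      one_apply_eq_self]
  have hsum : V (u, Z h) = V (u, 0) + V (0, Z h) := by rw [← map_add]; simp
  refine ⟨h, hsum.trans (Prod.ext ?_ ?_)⟩
  · simp [transferFunction, h, T]
  · rw [Prod.snd_add, ← hTh, hT]
    simp

lemma transferFunction_eq_of_apply_eq [CompleteSpace H] {u : U} {w : W} {h : H}
    (heq : V (u, Z h) = (w, h)) : transferFunction V Z u = w := by
  obtain ⟨h', heq'⟩ := exists_state_transferFunction hV hZ u
  have hsub : V (0, Z (h' - h)) = (transferFunction V Z u - w, h' - h) := by
    rw [← Prod.mk_sub_mk, ← heq, ← heq', ← map_sub]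
    simp
  have hle := norm_snd_apply_zero_le hV (Z (h' - h))
  rw [hsub] at hle
  have hzero : h' = h := by
    by_contra hne
    have hpos : 0 < ‖h' - h‖ := norm_pos_iff.2 (sub_ne_zero.2 hne)
    nlinarith [Z.le_opNorm (h' - h)]
  rw [hzero, heq] at heq'
  exact (congrArg Prod.fst heq').symm

lemma norm_transferFunction_le_one [CompleteSpace H] : ‖transferFunction V Z‖ ≤ 1 := by
  refine ContinuousLinearMap.opNorm_le_bound _ zero_le_one fun u => ?_
  obtain ⟨h, heq⟩ := exists_state_transferFunction hV hZ u
  have hle := hV (u, Z h)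
  simp only [heq] at hle
  have hZh : ‖Z h‖ ^ 2 ≤ ‖h‖ ^ 2 := by
    gcongr
    exact (Z.le_opNorm h).trans (mul_le_of_le_one_left (norm_nonneg h) hZ.le)
  rw [one_mul]
  exact le_of_sq_le_sq (by linarith) (norm_nonneg u)

omit hZ in
lemma differentiableOn_transferFunction [CompleteSpace H] {E : Type*} [NormedAddCommGroup E]
    [NormedSpace ℂ E] {Z : E → H →L[ℂ] H} {s : Set E} (hZd : DifferentiableOn ℂ Z s)
    (hZ : ∀ z ∈ s, ‖Z z‖ < 1) : DifferentiableOn ℂ (fun z => transferFunction V (Z z)) s := by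
  have hD : DifferentiableOn ℂ
      (fun z => Ring.inverse (1 - snd ℂ W H ∘L V ∘L inr ℂ U H ∘L Z z)) s :=
    DifferentiableOn.inverse (by fun_prop) fun z hz => isUnit_one_sub_of_contraction hV (hZ z hz)
  simp only [transferFunction]
  fun_prop

omit hV hZ

lemma exists_transferFunction_eq [CompleteSpace U] [CompleteSpace W] [CompleteSpace H] {X : Type*}
    {u : X → U} {w : X → W} {h : X → H} {Z : X → H →L[ℂ] H} (hZ : ∀ x, ‖Z x‖ < 1)
    (hpsd : (gram ℂ u + gram ℂ (fun x => Z x (h x)) - (gram ℂ w + gram ℂ h)).PosSemidef) :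
    ∃ V : U × H →L[ℂ] W × H, IsContractiveColligation V ∧
      ∀ x, transferFunction V (Z x) (u x) = w x := by
  have hprod : (gram ℂ (fun x => WithLp.toLp 2 (u x, Z x (h x))) -
      gram ℂ fun x => WithLp.toLp 2 (w x, h x)).PosSemidef := by
    convert hpsd using 1
    ext x y
    simp [Matrix.gram_apply]
  obtain ⟨V, hV, hVx⟩ := exists_contraction_of_posSemidef_gram_sub_gram hprod
  let e := WithLp.prodContinuousLinearEquiv 2 ℂ U H
  let e' := WithLp.prodContinuousLinearEquiv 2 ℂ W H
  let V' : U × H →L[ℂ] W × H := e'.toContinuousLinearMap ∘L V ∘L e.symm.toContinuousLinearMap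
  have hV' : IsContractiveColligation V' := fun p => by
    have hle := (V.le_opNorm (e.symm p)).trans (mul_le_of_le_one_left (norm_nonneg _) hV)
    rw [← sq_le_sq₀ (norm_nonneg _) (norm_nonneg _), WithLp.prod_norm_sq_eq_of_L2,
      WithLp.prod_norm_sq_eq_of_L2] at hle
    exact hle
  exact ⟨V', hV', fun x => transferFunction_eq_of_apply_eq hV' (hZ x) (congrArg e' (hVx x))⟩

end TransferFunction

section BidiskKernels

lemma mem_bidisk_iff_norm_lt_one {z : ℂ × ℂ} : z ∈ Bidisk ↔ ‖z‖ < 1 := by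
  simp [Bidisk, Prod.norm_def]

lemma isOpen_bidisk : IsOpen Bidisk := by
  have : Bidisk = Metric.ball 0 1 := Set.ext fun z => by simp [mem_bidisk_iff_norm_lt_one]
  exact this ▸ Metric.isOpen_ball

lemma IsPSDKernel.conj_symm {k : ℂ × ℂ → ℂ × ℂ → ℂ} (hk : IsPSDKernel k) {x y : ℂ × ℂ}
    (hx : x ∈ Bidisk) (hy : y ∈ Bidisk) : conj (k x y) = k y x := by
  have hdiag {x} (hx : x ∈ Bidisk) : (k x x).im = 0 := by
    simpa using (Complex.le_def.1 (hk 1 ![x] (by simpa using hx) ![1])).2.symm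
  have hxy := (Complex.le_def.1 (hk 2 ![x, y] (by simp [hx, hy]) ![1, 1])).2
  have hxIy := (Complex.le_def.1 (hk 2 ![x, y] (by simp [hx, hy]) ![1, Complex.I])).2
  simp only [Fin.sum_univ_two, Matrix.cons_val_zero, Matrix.cons_val_one, map_one,
    Complex.conj_I, one_mul, mul_one, mul_neg, neg_mul, Complex.I_mul_I, neg_neg, Complex.add_im,
    Complex.neg_im, Complex.I_mul_im, Complex.zero_im, hdiag hx, hdiag hy] at hxy hxIy
  refine Complex.ext ?_ ?_
  · rw [Complex.conj_re]
    linarith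
  · rw [Complex.conj_im]
    linarith

lemma isPSDKernel_iff_posSemidef {k : ℂ × ℂ → ℂ × ℂ → ℂ} :
    IsPSDKernel k ↔ (Matrix.of fun x y : Bidisk => k x y).PosSemidef := by
  refine ⟨fun hk => ⟨?_, fun c => ?_⟩, fun hk n mu hmu a => ?_⟩
  · ext x y
    exact hk.conj_symm y.2 x.2
  · let e := c.support.equivFin
    have hsum (g : Bidisk → ℂ → ℂ) : c.sum g = ∑ i, g (e.symm i) (c (e.symm i)) := by
      rw [Finsupp.sum, ← Finset.sum_coe_sort, ← e.symm.sum_comp]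
    simpa only [hsum, Matrix.of_apply, star_star, mul_right_comm _ (k _ _), starRingEnd_apply]
      using hk _ (fun i => (e.symm i).1) (fun i => (e.symm i).1.2) fun i => star (c (e.symm i))
  · have := (hk.submatrix fun i => (⟨mu i, hmu i⟩ : Bidisk)).dotProduct_mulVec_nonneg (star a)
    refine this.trans_eq ?_
    simp only [dotProduct, Matrix.mulVec, Finset.mul_sum, Matrix.submatrix_apply, Matrix.of_apply,
      star_star, Pi.star_apply, starRingEnd_apply]
    exact Finset.sum_congr rfl fun i _ => Finset.sum_congr rfl fun j _ => by ring

/-- The three weights `1`, `1 - z₁ w̄₁`, `1 - z₂ w̄₂` that define admissibility. -/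
def admissibleWeight : Fin 3 → Matrix Bidisk Bidisk ℂ :=
  ![.of fun _ _ => 1, .of fun z w => 1 - z.1.1 * conj w.1.1, .of fun z w => 1 - z.1.2 * conj w.1.2]

lemma isAdmissibleKernel_iff_posSemidef {k : ℂ × ℂ → ℂ × ℂ → ℂ} :
    IsAdmissibleKernel k ↔
      ∀ r, (admissibleWeight r ⊙ Matrix.of fun x y : Bidisk => k x y).PosSemidef := by
  simp only [IsAdmissibleKernel, isPSDKernel_iff_posSemidef, Fin.forall_fin_succ,
    IsEmpty.forall_iff, and_true]
  refine and_congr ?_ Iff.rfl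
  convert Iff.rfl using 2
  ext x y
  simp [admissibleWeight]

lemma isHermitian_admissibleWeight (r : Fin 3) : (admissibleWeight r).IsHermitian := by
  ext z w
  fin_cases r <;> simp [admissibleWeight, mul_comm]

lemma admissibleWeight_self_pos (r : Fin 3) (z : Bidisk) : 0 < admissibleWeight r z z := by
  have hpos {a : ℂ} (ha : ‖a‖ < 1) : 0 < 1 - a * conj a := by
    rw [Complex.mul_conj, Complex.normSq_eq_norm_sq, ← Complex.ofReal_one, ← Complex.ofReal_sub,
      Complex.zero_lt_real]
    nlinarith [norm_nonneg a]
  fin_cases r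
  · simp [admissibleWeight]
  · exact hpos z.2.1
  · exact hpos z.2.2

lemma exists_agler_decomposition {M : ℂ × ℂ → ℂ × ℂ → ℂ} (hM : ∀ x y, conj (M y x) = M x y)
    (h : ∀ k, IsAdmissibleKernel k → IsPSDKernel fun x y => M x y * k x y) :
    ∃ G : Fin 3 → Matrix Bidisk Bidisk ℂ, (∀ r, (G r).PosSemidef) ∧
      ∑ r, admissibleWeight r ⊙ G r = Matrix.of fun x y : Bidisk => M x y := by
  classical
  refine mem_schurCone_of_forall_posSemidef admissibleWeight_self_pos isHermitian_admissibleWeight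
    (Matrix.ext fun x y => hM x y) fun κ hκ => ?_
  have : Nonempty Bidisk := ⟨⟨0, by simp [Bidisk]⟩⟩
  let toBidisk := Function.invFun (Subtype.val : Bidisk → ℂ × ℂ)
  have htoBidisk (x : Bidisk) : toBidisk x = x :=
    Function.leftInverse_invFun Subtype.val_injective x
  have hrestrict : (Matrix.of fun x y : Bidisk => κ (toBidisk x) (toBidisk y)) = κ := by
    ext x y
    simp only [htoBidisk, Matrix.of_apply]
  have := h (fun x y => κ (toBidisk x) (toBidisk y))
    (isAdmissibleKernel_iff_posSemidef.2 (by rwa [hrestrict]))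
  rw [isPSDKernel_iff_posSemidef] at this
  simp only [htoBidisk] at this
  exact this

end BidiskKernels

section Realization

lemma sum_sq_norm_apply_orthonormalBasis {ι E : Type*} [Fintype ι] [NormedAddCommGroup E]
    [InnerProductSpace ℂ E] [CompleteSpace E] (b : OrthonormalBasis ι ℂ E) (g : StrongDual ℂ E) :
    ∑ i, ‖g (b i)‖ ^ 2 = ‖g‖ ^ 2 := by
  obtain ⟨v, rfl⟩ := (InnerProductSpace.toDual ℂ E).surjective g
  simp [b.sum_sq_norm_inner_left]

variable (H₁ H₂ : Type*) [NormedAddCommGroup H₁] [InnerProductSpace ℂ H₁]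
  [NormedAddCommGroup H₂] [InnerProductSpace ℂ H₂]

/-- The operator `z₁ ⊕ z₂` on the Hilbert space direct sum `H₁ ⊕ H₂`. -/
noncomputable def diagonalOperator (z : ℂ × ℂ) : WithLp 2 (H₁ × H₂) →L[ℂ] WithLp 2 (H₁ × H₂) :=
  let e := WithLp.prodContinuousLinearEquiv 2 ℂ H₁ H₂
  e.symm.toContinuousLinearMap ∘L
    (z.1 • ContinuousLinearMap.inl ℂ H₁ H₂ ∘L ContinuousLinearMap.fst ℂ H₁ H₂ +
      z.2 • ContinuousLinearMap.inr ℂ H₁ H₂ ∘L ContinuousLinearMap.snd ℂ H₁ H₂) ∘L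
    e.toContinuousLinearMap

variable {H₁ H₂}

lemma diagonalOperator_apply (z : ℂ × ℂ) (h : WithLp 2 (H₁ × H₂)) :
    diagonalOperator H₁ H₂ z h = WithLp.toLp 2 (z.1 • h.fst, z.2 • h.snd) := by
  simp only [diagonalOperator]
  refine congrArg (WithLp.toLp 2) (Prod.ext ?_ ?_) <;> simp

lemma norm_diagonalOperator_le (z : ℂ × ℂ) : ‖diagonalOperator H₁ H₂ z‖ ≤ ‖z‖ := by
  refine ContinuousLinearMap.opNorm_le_bound _ (norm_nonneg z) fun h => ?_
  refine le_of_sq_le_sq ?_ (by positivity)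
  rw [diagonalOperator_apply, mul_pow, WithLp.prod_norm_sq_eq_of_L2, WithLp.prod_norm_sq_eq_of_L2,
    mul_add]
  simp only [WithLp.toLp_fst, WithLp.toLp_snd, norm_smul, mul_pow]
  gcongr
  · exact norm_fst_le z
  · exact norm_snd_le z

lemma differentiable_diagonalOperator : Differentiable ℂ (diagonalOperator H₁ H₂) := by
  unfold diagonalOperator
  fun_prop

lemma norm_diagonalOperator_lt_one {z : ℂ × ℂ} (hz : z ∈ Bidisk) :
    ‖diagonalOperator H₁ H₂ z‖ < 1 :=
  (norm_diagonalOperator_le z).trans_lt (mem_bidisk_iff_norm_lt_one.1 hz)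

variable {ι : Type*} [Fintype ι] {φ : ι → ℂ × ℂ → ℂ} {δ : ℝ} (hδ : 0 < δ)
  {G : Fin 3 → Matrix Bidisk Bidisk ℂ} (hG : ∀ r, (G r).PosSemidef)
  (hsum : ∑ r, admissibleWeight r ⊙ G r =
    Matrix.of fun x y : Bidisk => ∑ i, φ i x * conj (φ i y) - (δ : ℂ))

include hδ hG hsum

lemma exists_colligation_of_agler_decomposition [CompleteSpace H₁] [CompleteSpace H₂]
    {u₁ : Bidisk → H₁} {u₂ : Bidisk → H₂} (hu₁ : gram ℂ u₁ = (G 1)ᵀ) (hu₂ : gram ℂ u₂ = (G 2)ᵀ) :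
    ∃ V : EuclideanSpace ℂ ι × WithLp 2 (H₁ × H₂) →L[ℂ] ℂ × WithLp 2 (H₁ × H₂),
      IsContractiveColligation V ∧ ∀ x : Bidisk,
        transferFunction V (diagonalOperator H₁ H₂ x) (WithLp.toLp 2 fun i => φ i x) = √δ := by
  let h (x : Bidisk) : WithLp 2 (H₁ × H₂) := WithLp.toLp 2 (u₁ x, u₂ x)
  suffices hgram : gram ℂ (fun x : Bidisk => WithLp.toLp 2 fun i => φ i x) +
      gram ℂ (fun x : Bidisk => diagonalOperator H₁ H₂ x (h x)) -
      (gram ℂ (fun _ : Bidisk => (√δ : ℂ)) + gram ℂ h) = (G 0)ᵀ from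
    exists_transferFunction_eq (fun x => norm_diagonalOperator_lt_one x.2)
      (hgram ▸ (hG 0).transpose)
  ext x y
  have hsum_yx := congrArg (· y x) hsum
  have h₁ : ⟪u₁ x, u₁ y⟫_ℂ = G 1 y x := congrArg (· x y) hu₁
  have h₂ : ⟪u₂ x, u₂ y⟫_ℂ = G 2 y x := congrArg (· x y) hu₂
  have hsqrt : (√δ : ℂ) * √δ = δ := by rw [← Complex.ofReal_mul, Real.mul_self_sqrt hδ.le]
  simp only [Matrix.sum_apply, Fin.sum_univ_three, Matrix.hadamard_apply, Matrix.of_apply,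
    admissibleWeight, Matrix.cons_val, one_mul] at hsum_yx
  simp only [h, diagonalOperator_apply, Matrix.sub_apply, Matrix.add_apply, Matrix.gram_apply,
    Matrix.transpose_apply, WithLp.prod_inner_apply, WithLp.toLp_fst, WithLp.toLp_snd,
    inner_smul_left, inner_smul_right, h₁, h₂, PiLp.inner_apply, RCLike.inner_apply,
    Complex.conj_ofReal, hsqrt]
  linear_combination -hsum_yx

lemma exists_differentiableOn_row_of_agler_decomposition :
    ∃ ψ : ι → ℂ × ℂ → ℂ, (∀ i, DifferentiableOn ℂ (ψ i) Bidisk) ∧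
      (∀ z ∈ Bidisk, ∑ i, ψ i z * φ i z = 1) ∧ ∀ z ∈ Bidisk, ∑ i, ‖ψ i z‖ ^ 2 ≤ 1 / δ := by
  obtain ⟨H₁, _, _, _, u₁, hu₁⟩ := exists_gram_eq (hG 1).transpose
  obtain ⟨H₂, _, _, _, u₂, hu₂⟩ := exists_gram_eq (hG 2).transpose
  obtain ⟨V, hV, hVφ⟩ := exists_colligation_of_agler_decomposition hδ hG hsum hu₁ hu₂
  let F (z : ℂ × ℂ) : StrongDual ℂ (EuclideanSpace ℂ ι) :=
    transferFunction V (diagonalOperator H₁ H₂ z)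
  let b := EuclideanSpace.basisFun ι ℂ
  refine ⟨fun i z => F z (b i) / √δ, fun i => ?_, fun z hz => ?_, fun z hz => ?_⟩
  · have hF : DifferentiableOn ℂ F Bidisk := differentiableOn_transferFunction hV
      differentiable_diagonalOperator.differentiableOn fun z => norm_diagonalOperator_lt_one
    fun_prop
  · have hδ0 : (√δ : ℂ) ≠ 0 := by simpa using (Real.sqrt_pos.2 hδ).ne'
    have hFφ : F z (WithLp.toLp 2 fun i => φ i z) = √δ := hVφ ⟨z, hz⟩
    calc ∑ i, F z (b i) / √δ * φ i z
        = F z (∑ i, φ i z • b i) / √δ := by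
          simp only [map_sum, map_smul, smul_eq_mul, Finset.sum_div]
          exact Finset.sum_congr rfl fun i _ => by ring
      _ = F z (WithLp.toLp 2 fun i => φ i z) / √δ := by
          rw [← b.sum_repr (WithLp.toLp 2 _)]
          rfl
      _ = 1 := by rw [hFφ, div_self hδ0]
  · have hF : ‖F z‖ ≤ 1 := norm_transferFunction_le_one hV (norm_diagonalOperator_lt_one hz)
    simp only [norm_div, div_pow, ← Finset.sum_div, Complex.norm_real, Real.norm_eq_abs, sq_abs,
      Real.sq_sqrt hδ.le, sum_sq_norm_apply_orthonormalBasis]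
    gcongr
    exact pow_le_one₀ (norm_nonneg _) hF

end Realization

section BidiskFunctionalCalculus

open Metric Set

variable {A : Type*} [NormedRing A] [NormedAlgebra ℂ A]

/-- The Cauchy integral `(2πi)⁻¹ ∮ (ζ - a)⁻¹ g(ζ) dζ` over the circle `|ζ| = R`, for an element `a`
and a function `g` with values in a Banach algebra. -/
noncomputable def cauchyTransform (a : A) (R : ℝ) (g : ℂ → A) : A :=
  (2 * Real.pi * Complex.I : ℂ)⁻¹ • ∮ ζ in C(0, R), resolvent a ζ * g ζ

lemma algHom_resolvent (χ : A →ₐ[ℂ] ℂ) {a : A} {ζ : ℂ} (hζ : ζ ∈ resolventSet ℂ a) :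
    χ (resolvent a ζ) = (ζ - χ a)⁻¹ := by
  refine eq_inv_of_mul_eq_one_right ?_
  have hmul := congrArg χ (Ring.mul_inverse_cancel _ hζ)
  rwa [map_mul, map_one, map_sub, AlgHom.commutes] at hmul

variable {a b : A} {R : ℝ}

lemma spectrum_subset_ball_of_norm_lt [CompleteSpace A] (ha : ‖a‖ < R) :
    spectrum ℂ a ⊆ ball 0 R := by
  intro ζ hζ
  rw [mem_ball_zero_iff]
  by_contra! hR
  have hζ0 : ζ ≠ 0 := norm_pos_iff.1 ((norm_nonneg a).trans_lt (ha.trans_le hR))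
  have hnorm : ‖ζ⁻¹ • a‖ < 1 := by
    rw [norm_smul, norm_inv, inv_mul_lt_one₀ (norm_pos_iff.2 hζ0)]
    exact ha.trans_le hR
  refine hζ ?_
  have h := (isUnit_one_sub_of_norm_lt_one hnorm).smul (Units.mk0 ζ hζ0)
  rwa [Units.smul_mk0, smul_sub, smul_inv_smul₀ hζ0, ← Algebra.algebraMap_eq_smul_one] at h

variable (ha : spectrum ℂ a ⊆ ball 0 R)

include ha

lemma algHom_apply_mem_ball (χ : A →ₐ[ℂ] ℂ) : χ a ∈ ball 0 R :=
  ha (AlgHom.apply_mem_spectrum χ a)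

lemma circleMap_mem_resolventSet (hR : 0 ≤ R) (θ : ℝ) : circleMap 0 R θ ∈ resolventSet ℂ a := by
  by_contra hθ
  have := ha hθ
  simp [abs_of_nonneg hR] at this

variable [CompleteSpace A]

lemma continuous_resolvent_circleMap (hR : 0 ≤ R) :
    Continuous fun θ => resolvent a (circleMap 0 R θ) :=
  continuous_iff_continuousAt.2 fun θ => ContinuousAt.comp (f := circleMap 0 R)
    (spectrum.hasDerivAt_resolvent_const_left
      (circleMap_mem_resolventSet ha hR θ)).continuousAt (continuous_circleMap 0 R).continuousAt

lemma continuous_cauchyTransform (hR : 0 ≤ R) {Y : Type*} [TopologicalSpace Y] {g : Y → ℂ → A}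
    (hg : Continuous fun p : Y × ℝ => g p.1 (circleMap 0 R p.2)) :
    Continuous fun y => cauchyTransform a R (g y) := by
  refine Continuous.const_smul
    (intervalIntegral.continuous_parametric_intervalIntegral_of_continuous' ?_ _ _) _
  simp only [deriv_circleMap]
  exact (((continuous_circleMap 0 R).comp continuous_snd).mul continuous_const).smul
    (((continuous_resolvent_circleMap ha hR).comp continuous_snd).mul hg)

lemma algHom_cauchyTransform (χ : A →ₐ[ℂ] ℂ) (hR : 0 ≤ R) {g : ℂ → A} {F : ℂ → ℂ}
    (hg : Continuous fun θ => g (circleMap 0 R θ)) (hF : DiffContOnCl ℂ F (ball 0 R))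
    (hgF : ∀ θ, χ (g (circleMap 0 R θ)) = F (circleMap 0 R θ)) :
    χ (cauchyTransform a R g) = F (χ a) := by
  rw [← hF.two_pi_i_inv_smul_circleIntegral_sub_inv_smul (algHom_apply_mem_ball ha χ),
    cauchyTransform, map_smul]
  have hint : Continuous fun θ =>
      deriv (circleMap 0 R) θ • (resolvent a (circleMap 0 R θ) * g (circleMap 0 R θ)) := by
    simp only [deriv_circleMap]
    exact ((continuous_circleMap 0 R).mul continuous_const).smul
      ((continuous_resolvent_circleMap ha hR).mul hg)
  congr 1
  refine (χ.toContinuousLinearMap.intervalIntegral_comp_comm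
    (hint.intervalIntegrable _ _)).symm.trans ?_
  refine intervalIntegral.integral_congr fun θ _ => ?_
  simp only [AlgHom.coe_toContinuousLinearMap, map_smul, map_mul, hgF,
    algHom_resolvent χ (circleMap_mem_resolventSet ha hR θ), smul_eq_mul]

lemma exists_algHom_eq_of_differentiableOn_bidisk (hb : spectrum ℂ b ⊆ ball 0 R) (hR : 0 ≤ R)
    (hR1 : R < 1) {f : ℂ × ℂ → ℂ} (hf : DifferentiableOn ℂ f Bidisk) :
    ∃ q : A, ∀ χ : A →ₐ[ℂ] ℂ, χ q = f (χ a, χ b) := by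
  let inner (ζ : ℂ) : A := cauchyTransform b R fun η => algebraMap ℂ A (f (ζ, η))
  have hmem {ζ η : ℂ} (hζ : ‖ζ‖ ≤ R) (hη : ‖η‖ ≤ R) : (ζ, η) ∈ Bidisk :=
    ⟨hζ.trans_lt hR1, hη.trans_lt hR1⟩
  have hcircle (θ : ℝ) : ‖circleMap 0 R θ‖ ≤ R := by simp [abs_of_nonneg hR]
  have hf_torus : Continuous fun p : ℝ × ℝ => f (circleMap 0 R p.1, circleMap 0 R p.2) :=
    hf.continuousOn.comp_continuous (by fun_prop) fun p => hmem (hcircle _) (hcircle _)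
  have hf_fst {η : ℂ} (hη : ‖η‖ ≤ R) : DiffContOnCl ℂ (fun ζ => f (ζ, η)) (ball 0 R) :=
    (hf.comp (t := Bidisk) (s := closedBall 0 R) (by fun_prop) fun ζ hζ =>
      hmem (mem_closedBall_zero_iff.1 hζ) hη).diffContOnCl_ball subset_rfl
  have hf_snd {ζ : ℂ} (hζ : ‖ζ‖ ≤ R) : DiffContOnCl ℂ (fun η => f (ζ, η)) (ball 0 R) :=
    (hf.comp (t := Bidisk) (s := closedBall 0 R) (by fun_prop) fun η hη =>
      hmem hζ (mem_closedBall_zero_iff.1 hη)).diffContOnCl_ball subset_rfl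
  refine ⟨cauchyTransform a R inner, fun χ => ?_⟩
  have hχb : ‖χ b‖ ≤ R := (mem_ball_zero_iff.1 (algHom_apply_mem_ball hb χ)).le
  refine algHom_cauchyTransform ha χ hR (continuous_cauchyTransform hb hR ?_) (hf_fst hχb)
    fun θ => ?_
  · exact (continuous_algebraMap ℂ A).comp hf_torus
  · refine algHom_cauchyTransform hb χ hR ?_ (hf_snd (hcircle θ)) fun θ' => AlgHom.commutes χ _
    exact (continuous_algebraMap ℂ A).comp (hf_torus.comp (Continuous.prodMk_right θ))

end BidiskFunctionalCalculus

section CommutativeRows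

open ContinuousLinearMap (adjoint_inner_left star_eq_adjoint)

universe u

lemma exists_starAlgHom_commCStarAlgebra {B : Type u} [CStarAlgebra B] {s : Set B}
    (hs : ∀ a ∈ s, ∀ b ∈ s, a * b = b * a) (hs_star : ∀ a ∈ s, ∀ b ∈ s, a * star b = star b * a) :
    ∃ (C : Type u) (_ : CommCStarAlgebra C) (π : C →⋆ₐ[ℂ] B),
      (∀ c, ‖π c‖ = ‖c‖) ∧ s ⊆ Set.range π := by
  have hcomm := StarAlgebra.isMulCommutative_adjoin ℂ hs hs_star
  let C : StarSubalgebra ℂ B := (StarAlgebra.adjoin ℂ s).topologicalClosure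
  have hC : IsClosed (C : Set B) := StarSubalgebra.isClosed_topologicalClosure _
  let _ : CommCStarAlgebra C :=
    { StarSubalgebra.cstarAlgebra C with
      mul_comm := (StarSubalgebra.commRingTopologicalClosure _ hcomm.is_comm.comm).mul_comm }
  exact ⟨C, inferInstance, { C.subtype with }, fun _ => rfl, fun a ha =>
    ⟨⟨a, StarSubalgebra.le_topologicalClosure _ (StarAlgebra.subset_adjoin ℂ s ha)⟩, rfl⟩⟩

variable {ι : Type*} [Fintype ι]

lemma norm_sum_mul_star_le {C : Type*} [CommCStarAlgebra C] {q : ι → C} {M : ℝ} (hM : 0 ≤ M)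
    (hq : ∀ χ : C →ₐ[ℂ] ℂ, ∑ i, ‖χ (q i)‖ ^ 2 ≤ M) : ‖∑ i, q i * star (q i)‖ ≤ M := by
  rw [← (AddMonoidHomClass.isometry_iff_norm _).1 (gelfandTransform_isometry C),
    ContinuousMap.norm_le _ hM]
  intro χ
  have hχ : WeakDual.gelfandTransform ℂ C (∑ i, q i * star (q i)) χ =
      (∑ i, ‖χ (q i)‖ ^ 2 : ℝ) := by
    rw [WeakDual.gelfandTransform_apply_apply]
    simp only [map_sum, map_mul, map_star, RCLike.star_def, Complex.mul_conj', Complex.ofReal_sum,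
      Complex.ofReal_pow]
  rw [hχ, Complex.norm_real, Real.norm_of_nonneg (by positivity)]
  exact hq (WeakDual.CharacterSpace.toAlgHom χ)

variable {K : Type*} [NormedAddCommGroup K] [InnerProductSpace ℂ K] [CompleteSpace K]

lemma norm_sum_apply_sq_le (A : ι → K →L[ℂ] K) (k : ι → K) :
    ‖∑ i, A i (k i)‖ ^ 2 ≤ ‖∑ i, A i * star (A i)‖ * ∑ i, ‖k i‖ ^ 2 := by
  set v := ∑ i, A i (k i) with hv
  have hsum : ∑ i, ‖star (A i) v‖ ^ 2 ≤ ‖∑ i, A i * star (A i)‖ * ‖v‖ ^ 2 := by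
    have hinner : ⟪v, (∑ i, A i * star (A i)) v⟫_ℂ = (∑ i, ‖star (A i) v‖ ^ 2 : ℝ) := by
      simp only [_root_.sum_apply, inner_sum, mul_apply_eq_comp, star_eq_adjoint,
        Complex.ofReal_sum]
      refine Finset.sum_congr rfl fun i _ => ?_
      rw [← adjoint_inner_left, Complex.ofReal_pow]
      exact inner_self_eq_norm_sq_to_K _
    calc ∑ i, ‖star (A i) v‖ ^ 2 = ‖⟪v, (∑ i, A i * star (A i)) v⟫_ℂ‖ := by
          rw [hinner, Complex.norm_real, Real.norm_of_nonneg (by positivity)]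
      _ ≤ ‖v‖ * (‖∑ i, A i * star (A i)‖ * ‖v‖) := (norm_inner_le_norm _ _).trans
          (mul_le_mul_of_nonneg_left (ContinuousLinearMap.le_opNorm _ _) (norm_nonneg v))
      _ = ‖∑ i, A i * star (A i)‖ * ‖v‖ ^ 2 := by ring
  have hv_le : ‖v‖ ^ 2 ≤ ∑ i, ‖star (A i) v‖ * ‖k i‖ := by
    have hv_inner : (‖v‖ ^ 2 : ℂ) = ∑ i, ⟪star (A i) v, k i⟫_ℂ := by
      simp only [star_eq_adjoint, adjoint_inner_left, ← inner_sum, ← hv]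
      exact (inner_self_eq_norm_sq_to_K v).symm
    calc ‖v‖ ^ 2 = ‖∑ i, ⟪star (A i) v, k i⟫_ℂ‖ := by rw [← hv_inner]; simp
      _ ≤ ∑ i, ‖star (A i) v‖ * ‖k i‖ :=
        (norm_sum_le _ _).trans (Finset.sum_le_sum fun i _ => norm_inner_le_norm _ _)
  rcases (norm_nonneg v).eq_or_lt with h0 | h0
  · rw [← h0, zero_pow two_ne_zero]
    positivity
  refine le_of_mul_le_mul_right ?_ (pow_pos h0 2)
  calc ‖v‖ ^ 2 * ‖v‖ ^ 2 = (‖v‖ ^ 2) ^ 2 := by ring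
    _ ≤ (∑ i, ‖star (A i) v‖ * ‖k i‖) ^ 2 := by gcongr
    _ ≤ (∑ i, ‖star (A i) v‖ ^ 2) * ∑ i, ‖k i‖ ^ 2 := Finset.sum_mul_sq_le_sq_mul_sq _ _ _
    _ ≤ ‖∑ i, A i * star (A i)‖ * ‖v‖ ^ 2 * ∑ i, ‖k i‖ ^ 2 := by gcongr
    _ = ‖∑ i, A i * star (A i)‖ * (∑ i, ‖k i‖ ^ 2) * ‖v‖ ^ 2 := by ring

lemma norm_sum_starAlgHom_apply_sq_le {C : Type*} [CommCStarAlgebra C]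
    (π : C →⋆ₐ[ℂ] K →L[ℂ] K) {q : ι → C} {M : ℝ} (hM : 0 ≤ M)
    (hq : ∀ χ : C →ₐ[ℂ] ℂ, ∑ i, ‖χ (q i)‖ ^ 2 ≤ M) (k : ι → K) :
    ‖∑ i, π (q i) (k i)‖ ^ 2 ≤ M * ∑ i, ‖k i‖ ^ 2 := by
  refine (norm_sum_apply_sq_le (fun i => π (q i)) k).trans ?_
  gcongr
  simp only [← map_star, ← map_mul, ← map_sum]
  exact (NonUnitalStarAlgHom.norm_apply_le π _).trans (norm_sum_mul_star_le hM hq)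

end CommutativeRows

section AndoDilation

open Filter

universe u

variable {H : Type u} [NormedAddCommGroup H] [InnerProductSpace ℂ H]

lemma exists_defect_operator [CompleteSpace H] {S : H →L[ℂ] H} (hS : ‖S‖ ≤ 1) :
    ∃ D : H →L[ℂ] H, ∀ h, ‖D h‖ ^ 2 = ‖h‖ ^ 2 - ‖S h‖ ^ 2 := by
  have hnonneg : 0 ≤ 1 - star S * S := by
    rw [sub_nonneg]
    refine CStarAlgebra.norm_le_one_iff_of_nonneg _ (star_mul_self_nonneg S) |>.1 ?_
    rw [CStarRing.norm_star_mul_self]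
    exact mul_le_one₀ hS (norm_nonneg S) hS
  obtain ⟨D, hD⟩ := CStarAlgebra.nonneg_iff_eq_star_mul_self.1 hnonneg
  refine ⟨D, fun h => ?_⟩
  have hnorm (Q : H →L[ℂ] H) : ‖Q h‖ ^ 2 = RCLike.re ⟪(star Q * Q) h, h⟫_ℂ :=
    Q.apply_norm_sq_eq_inner_adjoint_left h
  rw [hnorm D, hnorm S, ← hD, sub_apply, one_apply_eq_self, inner_sub_left, map_sub,
    inner_self_eq_norm_sq]

lemma exists_linearIsometryEquiv_of_norm_eq {V E : Type*} [AddCommGroup V] [Module ℂ V]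
    [NormedAddCommGroup E] [InnerProductSpace ℂ E] [FiniteDimensional ℂ E]
    {f g : V →ₗ[ℂ] E} (h : ∀ v, ‖f v‖ = ‖g v‖) : ∃ G : E ≃ₗᵢ[ℂ] E, ∀ v, G (f v) = g v := by
  have := FiniteDimensional.complete ℂ E
  obtain ⟨C, -, hC⟩ := exists_contraction_of_norm_le fun v => (h v).ge
  let L : f.range →ₗᵢ[ℂ] E := ⟨C.toLinearMap.domRestrict f.range, by
    rintro ⟨_, v, rfl⟩
    exact (congrArg norm (hC v)).trans (h v).symm⟩
  exact ⟨L.extend.toLinearIsometryEquiv rfl, fun v => (L.extend_apply ⟨f v, v, rfl⟩).trans (hC v)⟩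

section SequenceSpace

variable {α E : Type*} [NormedAddCommGroup E]

lemma memℓp_two_iff {c : α → E} : Memℓp c 2 ↔ Summable fun i => ‖c i‖ ^ 2 := by
  rw [memℓp_gen_iff (by norm_num)]
  norm_num

lemma hasSum_norm_sq_lp_two (c : lp (fun _ : α => E) 2) :
    HasSum (fun i => ‖c i‖ ^ 2) (‖c‖ ^ 2) := by
  simpa using lp.hasSum_norm (by norm_num) c

variable [InnerProductSpace ℂ E]

lemma exists_lp_linearIsometry_of_hasSum {V : Type*} [NormedAddCommGroup V] [NormedSpace ℂ V]
    (Φ : V →ₗ[ℂ] α → E) (hΦ : ∀ v, HasSum (fun i => ‖Φ v i‖ ^ 2) (‖v‖ ^ 2)) :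
    ∃ U : V →ₗᵢ[ℂ] lp (fun _ : α => E) 2, ∀ v, ⇑(U v) = Φ v := by
  refine ⟨⟨⟨⟨fun v => ⟨Φ v, memℓp_two_iff.2 (hΦ v).summable⟩, ?_⟩, ?_⟩, ?_⟩, fun v => rfl⟩
  · exact fun v w => Subtype.ext (map_add Φ v w)
  · exact fun r v => Subtype.ext (map_smul Φ r v)
  · refine fun v => (pow_left_inj₀ (norm_nonneg _) (norm_nonneg _) two_ne_zero).1 ?_
    exact (hasSum_norm_sq_lp_two _).unique (hΦ v)

lemma exists_lp_linearIsometryEquiv_of_hasSum (Φ : (α → E) ≃ₗ[ℂ] α → E)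
    (hΦ : ∀ c s, HasSum (fun i => ‖Φ c i‖ ^ 2) s ↔ HasSum (fun i => ‖c i‖ ^ 2) s) :
    ∃ U : lp (fun _ : α => E) 2 ≃ₗᵢ[ℂ] lp (fun _ : α => E) 2, ∀ c, ⇑(U c) = Φ c := by
  let coe : lp (fun _ : α => E) 2 →ₗ[ℂ] α → E := ⟨⟨fun c => c, lp.coeFn_add⟩, lp.coeFn_smul⟩
  obtain ⟨U, hU⟩ := exists_lp_linearIsometry_of_hasSum (Φ.toLinearMap ∘ₗ coe) fun c =>
    (hΦ c _).2 (hasSum_norm_sq_lp_two c)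
  refine ⟨LinearIsometryEquiv.ofSurjective U fun c => ?_, hU⟩
  have hc := (hΦ (Φ.symm c) _).1 (by simpa using hasSum_norm_sq_lp_two c)
  refine ⟨⟨Φ.symm c, memℓp_two_iff.2 hc.summable⟩, Subtype.ext ((hU _).trans ?_)⟩
  exact Φ.apply_symm_apply c

lemma inner_lp_eq_zero_of_disjoint_support {c d : lp (fun _ : α => E) 2}
    (h : ∀ i, c i = 0 ∨ d i = 0) : ⟪c, d⟫_ℂ = 0 := by
  rw [lp.inner_eq_tsum]
  refine (tsum_congr fun i => ?_).trans tsum_zero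
  rcases h i with hi | hi <;> simp [hi]

end SequenceSpace

lemma hasSum_add_comp_equiv {α : Type*} {a b : α → ℝ} {s : ℝ} (ha : ∀ i, 0 ≤ a i)
    (hb : ∀ i, 0 ≤ b i) (e : α ≃ α) (h : HasSum (fun i => a i + b i) s) :
    HasSum (fun i => a i + b (e i)) s := by
  obtain ⟨A, hA⟩ := h.summable.of_nonneg_of_le ha fun i => le_add_of_nonneg_right (hb i)
  obtain ⟨B, hB⟩ := h.summable.of_nonneg_of_le hb fun i => le_add_of_nonneg_left (ha i)
  rw [h.unique (hA.add hB)]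
  exact hA.add ((Equiv.hasSum_iff e).2 hB)

lemma hasSum_add_comp_equiv_iff {α : Type*} {a b : α → ℝ} {s : ℝ} (ha : ∀ i, 0 ≤ a i)
    (hb : ∀ i, 0 ≤ b i) (e : α ≃ α) :
    HasSum (fun i => a i + b (e i)) s ↔ HasSum (fun i => a i + b i) s :=
  ⟨fun h => by simpa using hasSum_add_comp_equiv ha (fun i => hb (e i)) e.symm h,
    hasSum_add_comp_equiv ha hb e⟩

/-- The square root `(p, q) ↦ (fun i => (q (i + 1), p i))` of the bilateral shift on sequences in
`E ⊕ E`. -/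
def swapShift (E : Type*) [AddCommGroup E] [Module ℂ E] :
    (ℤ → WithLp 2 (E × E)) ≃ₗ[ℂ] ℤ → WithLp 2 (E × E) where
  toFun c i := WithLp.toLp 2 ((c (i + 1)).snd, (c i).fst)
  invFun c i := WithLp.toLp 2 ((c i).snd, (c (i - 1)).fst)
  map_add' _ _ := rfl
  map_smul' _ _ := rfl
  left_inv c := funext fun i => by
    simp only [sub_add_cancel]
    rfl
  right_inv c := funext fun i => by
    simp only [add_sub_cancel_right]
    rfl

lemma swapShift_apply {E : Type*} [AddCommGroup E] [Module ℂ E] (c : ℤ → WithLp 2 (E × E))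
    (i : ℤ) : swapShift E c i = WithLp.toLp 2 ((c (i + 1)).snd, (c i).fst) := rfl

variable {E : Type*} [NormedAddCommGroup E] [InnerProductSpace ℂ E]

lemma hasSum_norm_sq_swapShift_iff (c : ℤ → WithLp 2 (E × E)) (s : ℝ) :
    HasSum (fun i => ‖swapShift E c i‖ ^ 2) s ↔ HasSum (fun i => ‖c i‖ ^ 2) s := by
  simp only [swapShift_apply, WithLp.prod_norm_sq_eq_of_L2]
  refine Iff.trans ?_ (hasSum_add_comp_equiv_iff (fun i => sq_nonneg ‖(c i).fst‖)
    (fun i => sq_nonneg ‖(c i).snd‖) (Equiv.addRight 1))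
  simp only [Equiv.coe_addRight, WithLp.toLp_fst, WithLp.toLp_snd, add_comm]

lemma exists_commuting_lp_unitaries (G : WithLp 2 (E × E) ≃ₗᵢ[ℂ] WithLp 2 (E × E)) :
    ∃ X Y : lp (fun _ : ℤ => WithLp 2 (E × E)) 2 ≃ₗᵢ[ℂ] lp (fun _ : ℤ => WithLp 2 (E × E)) 2,
      (∀ c i, X c i = G (swapShift E c i)) ∧
      (∀ c i, Y c i = swapShift E (fun j => G.symm (c j)) i) ∧
      ∀ c, X (Y c) = Y (X c) := by
  let Γ : (ℤ → WithLp 2 (E × E)) ≃ₗ[ℂ] ℤ → WithLp 2 (E × E) :=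
    LinearEquiv.piCongrRight fun _ => G.toLinearEquiv
  obtain ⟨X, hX⟩ := exists_lp_linearIsometryEquiv_of_hasSum (swapShift E ≪≫ₗ Γ) fun c s => by
    simpa [Γ] using hasSum_norm_sq_swapShift_iff c s
  obtain ⟨Y, hY⟩ := exists_lp_linearIsometryEquiv_of_hasSum (Γ.symm ≪≫ₗ swapShift E) fun c s => by
    simpa [Γ] using hasSum_norm_sq_swapShift_iff (Γ.symm c) s
  have hXi (c i) : X c i = G (swapShift E c i) := congrFun (hX c) i
  have hYi (c i) : Y c i = swapShift E (fun j => G.symm (c j)) i := congrFun (hY c) i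
  refine ⟨X, Y, hXi, hYi, fun c => lp.ext (funext fun i => ?_)⟩
  calc X (Y c) i = c (i + 1) := by
        rw [hXi, swapShift_apply, hYi, hYi, swapShift_apply, swapShift_apply]
        exact G.apply_symm_apply _
    _ = Y (X c) i := by
        rw [hYi, swapShift_apply, hXi, hXi, G.symm_apply_apply, G.symm_apply_apply]
        rfl

lemma exists_lp_orbit_linearIsometry {Δ : H →ₗ[ℂ] E} {A : H →L[ℂ] H}
    (hΔ : ∀ h, ‖Δ h‖ ^ 2 = ‖h‖ ^ 2 - ‖A h‖ ^ 2)
    (hA : ∀ h, Tendsto (fun n => (A ^ n) h) atTop (𝓝 0)) :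
    ∃ V : H →ₗᵢ[ℂ] lp (fun _ : ℤ => E) 2,
      (∀ h (n : ℕ), V h n = Δ ((A ^ n) h)) ∧ ∀ h (n : ℕ), V h (Int.negSucc n) = 0 := by
  let Φ : H →ₗ[ℂ] ℤ → E := LinearMap.pi (Int.rec (fun n => Δ ∘ₗ (A ^ n).toLinearMap) fun _ => 0)
  have hΦ (h) (n : ℕ) : Φ h n = Δ ((A ^ n) h) := rfl
  have hΦ_neg (h) (n : ℕ) : Φ h (Int.negSucc n) = 0 := rfl
  obtain ⟨V, hV⟩ := exists_lp_linearIsometry_of_hasSum Φ fun h => by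
    have hnat : HasSum (fun n : ℕ => ‖Φ h n‖ ^ 2) (‖h‖ ^ 2) := by
      refine (hasSum_iff_tendsto_nat_of_nonneg (fun n => sq_nonneg _) _).2 ?_
      have htel (n : ℕ) : ∑ i ∈ range n, ‖Φ h i‖ ^ 2 = ‖h‖ ^ 2 - ‖(A ^ n) h‖ ^ 2 := by
        have := Finset.sum_range_sub' (fun i => ‖(A ^ i) h‖ ^ 2) n
        simpa only [hΦ, hΔ, ← mul_apply_eq_comp, ← pow_succ', pow_zero, one_apply_eq_self]
          using this
      simpa [htel] using ((hA h).norm.pow 2).const_sub (‖h‖ ^ 2)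
    have hneg : HasSum (fun n : ℕ => ‖Φ h (-(n + 1))‖ ^ 2) 0 := by
      simp only [← Int.negSucc_eq, hΦ_neg, norm_zero, zero_pow two_ne_zero, hasSum_zero]
    rw [← add_zero (‖h‖ ^ 2)]
    exact HasSum.of_nat_of_neg_add_one (f := fun i => ‖Φ h i‖ ^ 2) hnat hneg
  exact ⟨V, fun h n => by rw [hV, hΦ], fun h n => by rw [hV, hΦ_neg]⟩

/-- The pair of commuting unitaries `X, Y` dilates `S, T`: with respect to the embedding `V`, the
range of `V` is the difference of the subspaces `N ⊕ V(H)` and `N`, both invariant for `X` and `Y`,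
and the compressions to it of `X` and `Y` are `S` and `T`. -/
structure IsUnitaryDilation {K : Type*} [NormedAddCommGroup K] [InnerProductSpace ℂ K]
    (S T : H →L[ℂ] H) (X Y : K ≃ₗᵢ[ℂ] K) (V : H →ₗᵢ[ℂ] K) (N : Submodule ℂ K) : Prop where
  commute : Commute X Y
  isClosed : IsClosed (N : Set K)
  inner_eq_zero : ∀ n ∈ N, ∀ h, ⟪n, V h⟫_ℂ = 0
  map_left_mem : ∀ n ∈ N, X n ∈ N
  map_right_mem : ∀ n ∈ N, Y n ∈ N
  sub_left_mem : ∀ h, X (V h) - V (S h) ∈ N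
  sub_right_mem : ∀ h, Y (V h) - V (T h) ∈ N

lemma exists_joint_defect [FiniteDimensional ℂ H] {S T : H →L[ℂ] H} (hS : ‖S‖ ≤ 1)
    (hT : ‖T‖ ≤ 1) (hST : Commute S T) :
    ∃ (Δ Δ' : H →ₗ[ℂ] WithLp 2 (H × H)) (G : WithLp 2 (H × H) ≃ₗᵢ[ℂ] WithLp 2 (H × H)),
      (∀ h, ‖Δ h‖ ^ 2 = ‖h‖ ^ 2 - ‖(S * T) h‖ ^ 2) ∧ (∀ h, G (Δ' h) = Δ h) ∧
      (∀ h, WithLp.toLp 2 ((Δ ((S * T) h)).snd, (Δ h).fst) = Δ' (S h)) ∧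
      ∀ h, WithLp.toLp 2 ((Δ' ((S * T) h)).snd, (Δ' h).fst) = Δ (T h) := by
  have := FiniteDimensional.complete ℂ H
  obtain ⟨DS, hDS⟩ := exists_defect_operator hS
  obtain ⟨DT, hDT⟩ := exists_defect_operator hT
  have hST_apply (h) : S (T h) = T (S h) := DFunLike.congr_fun hST.eq h
  let toE := (WithLp.linearEquiv 2 ℂ (H × H)).symm.toLinearMap
  let Δ := toE ∘ₗ ((DT ∘L S).prod DS).toLinearMap
  let Δ' := toE ∘ₗ ((DS ∘L T).prod DT).toLinearMap
  have hΔ_apply (h) : Δ h = WithLp.toLp 2 (DT (S h), DS h) := rfl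
  have hΔ'_apply (h) : Δ' h = WithLp.toLp 2 (DS (T h), DT h) := rfl
  have hΔ (h) : ‖Δ h‖ ^ 2 = ‖h‖ ^ 2 - ‖(S * T) h‖ ^ 2 := by
    simp [hΔ_apply, WithLp.prod_norm_sq_eq_of_L2, hDT, hDS, hST_apply]
  have hΔ' (h) : ‖Δ' h‖ ^ 2 = ‖h‖ ^ 2 - ‖(S * T) h‖ ^ 2 := by
    simp [hΔ'_apply, WithLp.prod_norm_sq_eq_of_L2, hDT, hDS]
  -- The defect of `S * T = T * S` telescopes through either factor, so the two norms agree.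
  obtain ⟨G, hG⟩ := exists_linearIsometryEquiv_of_norm_eq (f := Δ') (g := Δ) fun h =>
    (pow_left_inj₀ (norm_nonneg _) (norm_nonneg _) two_ne_zero).1 ((hΔ' h).trans (hΔ h).symm)
  refine ⟨Δ, Δ', G, hΔ, hG, fun h => ?_, fun h => ?_⟩
  · simp [hΔ_apply, hΔ'_apply, hST_apply]
  · simp [hΔ_apply, hΔ'_apply]

theorem exists_isUnitaryDilation [FiniteDimensional ℂ H] {S T : H →L[ℂ] H} (hS : ‖S‖ ≤ 1)
    (hT : ‖T‖ ≤ 1) (hST : Commute S T)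
    (hlim : ∀ h, Tendsto (fun n => ((S * T) ^ n) h) atTop (𝓝 0)) :
    ∃ (K : Type u) (_ : NormedAddCommGroup K) (_ : InnerProductSpace ℂ K) (_ : CompleteSpace K)
      (X Y : K ≃ₗᵢ[ℂ] K) (V : H →ₗᵢ[ℂ] K) (N : Submodule ℂ K), IsUnitaryDilation S T X Y V N := by
  have := FiniteDimensional.complete ℂ H
  obtain ⟨Δ, Δ', G, hΔ, hG, hΔS, hΔT⟩ := exists_joint_defect hS hT hST
  have hG_symm (h) : G.symm (Δ h) = Δ' h := by rw [← hG, G.symm_apply_apply]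
  obtain ⟨X, Y, hX, hY, hXY⟩ := exists_commuting_lp_unitaries G
  obtain ⟨V, hV, hV_neg⟩ := exists_lp_orbit_linearIsometry hΔ hlim
  have hXV (h) (n : ℕ) : X (V h) n = V (S h) n := by
    have hcomm : (S * T) ^ n * S = S * (S * T) ^ n :=
      (((Commute.refl S).mul_right hST).pow_right n).eq.symm
    rw [hX, swapShift_apply, ← Nat.cast_succ, hV, hV, hV, pow_succ', mul_apply_eq_comp, hΔS, hG,
      ← mul_apply_eq_comp, ← mul_apply_eq_comp, hcomm]
  have hYV (h) (n : ℕ) : Y (V h) n = V (T h) n := by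
    have hcomm : (S * T) ^ n * T = T * (S * T) ^ n :=
      ((hST.symm.mul_right (Commute.refl T)).pow_right n).eq.symm
    rw [hY, swapShift_apply, ← Nat.cast_succ, hV, hV, hV, hG_symm, hG_symm, pow_succ',
      mul_apply_eq_comp, hΔT, ← mul_apply_eq_comp, ← mul_apply_eq_comp, hcomm]
  let N : Submodule ℂ (lp (fun _ : ℤ => WithLp 2 (H × H)) 2) :=
    ⨅ n : ℕ, (lp.evalCLM ℂ (fun _ : ℤ => WithLp 2 (H × H)) 2 (n : ℤ)).ker
  have hN {c} : c ∈ N ↔ ∀ n : ℕ, c n = 0 := Submodule.mem_iInf _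
  refine ⟨_, inferInstance, inferInstance, inferInstance, X, Y, V, N, ?_⟩
  refine ⟨LinearIsometryEquiv.ext hXY, ?_, fun c hc h => ?_, fun c hc => hN.2 fun n => ?_,
    fun c hc => hN.2 fun n => ?_, fun h => hN.2 fun n => sub_eq_zero.2 (hXV h n),
    fun h => hN.2 fun n => sub_eq_zero.2 (hYV h n)⟩
  · rw [Submodule.coe_iInf]
    exact isClosed_iInter fun n => ContinuousLinearMap.isClosed_ker _
  · refine inner_lp_eq_zero_of_disjoint_support fun m => ?_
    exact m.rec (fun n => .inl (hN.1 hc n)) fun n => .inr (hV_neg h n)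
  · rw [hX, swapShift_apply, ← Nat.cast_succ, hN.1 hc, hN.1 hc]
    exact map_zero G
  · rw [hY, swapShift_apply, ← Nat.cast_succ, hN.1 hc, hN.1 hc, map_zero]
    rfl

end AndoDilation

section CompressionAlgebra

lemma exists_mem_algHom_eq_of_differentiableOn_bidisk {A : Type*} [NormedRing A] [NormedAlgebra ℂ A]
    [CompleteSpace A] {Q : Subalgebra ℂ A} (hQ : IsClosed (Q : Set A)) {a b : A} (ha : a ∈ Q)
    (hb : b ∈ Q) (ha1 : ‖a‖ < 1) (hb1 : ‖b‖ < 1) {f : ℂ × ℂ → ℂ}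
    (hf : DifferentiableOn ℂ f Bidisk) :
    ∃ q ∈ Q, ∀ χ : A →ₐ[ℂ] ℂ, χ q = f (χ a, χ b) := by
  have : CompleteSpace Q := hQ.completeSpace_coe
  obtain ⟨R, hR, hR1⟩ := exists_between (max_lt ha1 hb1)
  obtain ⟨haR, hbR⟩ := max_lt_iff.1 hR
  obtain ⟨q, hq⟩ := exists_algHom_eq_of_differentiableOn_bidisk (a := (⟨a, ha⟩ : Q)) (b := ⟨b, hb⟩)
    (spectrum_subset_ball_of_norm_lt haR) (spectrum_subset_ball_of_norm_lt hbR)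
    ((norm_nonneg a).trans haR.le) hR1 hf
  exact ⟨q, q.2, fun χ => hq (χ.comp Q.val)⟩

/- The scalar coordinates `σ → ℂ` carry the values `ψ i (r • z p)` along with the element of `A`, so
that membership of the pair in `Q` ties the two together. -/
lemma exists_row_mem_of_differentiableOn_bidisk {A σ ι : Type*} [NormedRing A] [NormedAlgebra ℂ A]
    [CompleteSpace A] [Finite σ] [Fintype ι] {Q : Subalgebra ℂ (A × (σ → ℂ))}
    (hQ : IsClosed (Q : Set (A × (σ → ℂ)))) {x y : A} {z : σ → ℂ × ℂ} (hx : ‖x‖ ≤ 1) (hy : ‖y‖ ≤ 1)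
    (hz : ∀ p, z p ∈ Bidisk) (hxQ : (x, fun p => (z p).1) ∈ Q) (hyQ : (y, fun p => (z p).2) ∈ Q)
    {r : ℂ} (hr : ‖r‖ < 1) {ψ : ι → ℂ × ℂ → ℂ} (hψ : ∀ i, DifferentiableOn ℂ (ψ i) Bidisk) {M : ℝ}
    (hM : ∀ w ∈ Bidisk, ∑ i, ‖ψ i w‖ ^ 2 ≤ M) :
    ∃ q : ι → A × (σ → ℂ), (∀ i, q i ∈ Q) ∧ (∀ χ : A →ₐ[ℂ] ℂ, ∑ i, ‖χ (q i).1‖ ^ 2 ≤ M) ∧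
      ∀ i p, (q i).2 p = ψ i (r • z p) := by
  cases nonempty_fintype σ
  have hnorm {c : A} {v : σ → ℂ} (hc : ‖c‖ ≤ 1) (hv : ∀ p, ‖v p‖ ≤ 1) : ‖r • (c, v)‖ < 1 := by
    rw [norm_smul]
    exact mul_lt_one_of_nonneg_of_lt_one_left (norm_nonneg r) hr
      (norm_prod_le_iff.2 ⟨hc, (pi_norm_le_iff_of_nonneg zero_le_one).2 hv⟩)
  have ha := hnorm hx fun p => (hz p).1.le
  have hb := hnorm hy fun p => (hz p).2.le
  choose q hqQ hq using fun i => exists_mem_algHom_eq_of_differentiableOn_bidisk hQ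
    (Q.smul_mem hxQ r) (Q.smul_mem hyQ r) ha hb (hψ i)
  refine ⟨q, hqQ, fun χ => ?_, fun i p => ?_⟩
  · have hqχ (i) : χ (q i).1 = ψ i (χ (r • x), χ (r • y)) :=
      hq i (χ.comp (AlgHom.fst ℂ A (σ → ℂ)))
    have hχ {c : A} (hc : ‖c‖ < 1) : ‖χ c‖ < 1 :=
      mem_ball_zero_iff.1 (algHom_apply_mem_ball (spectrum_subset_ball_of_norm_lt hc) χ)
    simp only [hqχ]
    exact hM _ ⟨hχ ((norm_fst_le _).trans_lt ha), hχ ((norm_fst_le _).trans_lt hb)⟩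
  · exact hq i ((Pi.evalAlgHom ℂ _ p).comp (AlgHom.snd ℂ A (σ → ℂ)))

variable {C K σ : Type*} [NormedAddCommGroup K] [NormedSpace ℂ K] [Ring C] [Algebra ℂ C]

/-- The pairs `(c, v)` such that `N` is invariant for `π c` and, modulo `N`, each `k x` is an
eigenvector of `π c` with eigenvalue `v x`. -/
def compressionAlgebra (π : C →ₐ[ℂ] K →L[ℂ] K) (N : Submodule ℂ K) (k : σ → K) :
    Subalgebra ℂ (C × (σ → ℂ)) where
  carrier := {p | (∀ n ∈ N, π p.1 n ∈ N) ∧ ∀ x, π p.1 (k x) - p.2 x • k x ∈ N}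
  mul_mem' := by
    rintro ⟨c, v⟩ ⟨d, w⟩ ⟨hcN, hc⟩ ⟨hdN, hd⟩
    refine ⟨fun n hn => ?_, fun x => ?_⟩
    · simpa using hcN _ (hdN n hn)
    · convert N.add_mem (hcN _ (hd x)) (N.smul_mem (w x) (hc x)) using 1
      simp [smul_sub, smul_smul, mul_comm]
  add_mem' := by
    rintro ⟨c, v⟩ ⟨d, w⟩ ⟨hcN, hc⟩ ⟨hdN, hd⟩
    refine ⟨fun n hn => ?_, fun x => ?_⟩
    · simpa using N.add_mem (hcN n hn) (hdN n hn)
    · convert N.add_mem (hc x) (hd x) using 1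
      simp [add_smul, add_sub_add_comm]
  algebraMap_mem' z := by
    refine ⟨fun n hn => ?_, fun x => ?_⟩
    · simpa [Algebra.algebraMap_eq_smul_one] using N.smul_mem z hn
    · simp [Algebra.algebraMap_eq_smul_one]

lemma isClosed_compressionAlgebra [TopologicalSpace C] {π : C →ₐ[ℂ] K →L[ℂ] K} (hπ : Continuous π)
    {N : Submodule ℂ K} (hN : IsClosed (N : Set K)) (k : σ → K) :
    IsClosed (compressionAlgebra π N k : Set (C × (σ → ℂ))) := by
  have hπ_apply (h : K) : Continuous fun p : C × (σ → ℂ) => π p.1 h :=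
    (hπ.comp continuous_fst).clm_apply continuous_const
  have hinv : IsClosed {p : C × (σ → ℂ) | ∀ n ∈ N, π p.1 n ∈ N} := by
    simp only [Set.ofPred_forall]
    exact isClosed_iInter fun n => isClosed_iInter fun _ => hN.preimage (hπ_apply n)
  have heig : IsClosed {p : C × (σ → ℂ) | ∀ x, π p.1 (k x) - p.2 x • k x ∈ N} := by
    simp only [Set.ofPred_forall]
    exact isClosed_iInter fun x => hN.preimage ((hπ_apply (k x)).sub (by fun_prop))
  exact hinv.inter heig

end CompressionAlgebra

section VonNeumannInequality

universe u

variable {H : Type*} [NormedAddCommGroup H] [InnerProductSpace ℂ H]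
  {K : Type u} [NormedAddCommGroup K] [InnerProductSpace ℂ K]
  {S T : H →L[ℂ] H} {X Y : K ≃ₗᵢ[ℂ] K} {V : H →ₗᵢ[ℂ] K} {N : Submodule ℂ K}

lemma IsUnitaryDilation.norm_le_of_sub_mem (hD : IsUnitaryDilation S T X Y V N) {k : K} {h : H}
    (hkh : k - V h ∈ N) : ‖h‖ ≤ ‖k‖ := by
  have hpyth := norm_add_sq_eq_norm_sq_add_norm_sq_of_inner_eq_zero _ _ (hD.inner_eq_zero _ hkh h)
  rw [sub_add_cancel, V.norm_map] at hpyth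
  exact le_of_sq_le_sq (by nlinarith [norm_nonneg (k - V h)]) (norm_nonneg k)

lemma exists_commCStarAlgebra_of_commute_unitary [CompleteSpace K] (hXY : Commute X Y) :
    ∃ (C : Type u) (_ : CommCStarAlgebra C) (π : C →⋆ₐ[ℂ] K →L[ℂ] K) (x y : C),
      (∀ k, π x k = X k) ∧ (∀ k, π y k = Y k) ∧ ‖x‖ ≤ 1 ∧ ‖y‖ ≤ 1 := by
  let op (Z : K ≃ₗᵢ[ℂ] K) : K →L[ℂ] K := Z
  have hop_comm {Z W : K ≃ₗᵢ[ℂ] K} (h : Commute Z W) : op Z * op W = op W * op Z :=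
    ContinuousLinearMap.ext fun k => DFunLike.congr_fun h.eq k
  have hop_star (Z : K ≃ₗᵢ[ℂ] K) : star (op Z) = op Z⁻¹ := Z.adjoint_eq_symm
  have hcomm : ∀ Z ∈ ({X, Y} : Set _), ∀ W ∈ ({X, Y} : Set _), Commute Z W := by
    simp [hXY, hXY.symm]
  obtain ⟨C, _, π, hπ, hC⟩ := exists_starAlgHom_commCStarAlgebra (s := op '' {X, Y})
    (by
      rintro _ ⟨Z, hZ, rfl⟩ _ ⟨W, hW, rfl⟩
      exact hop_comm (hcomm Z hZ W hW))
    (by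
      rintro _ ⟨Z, hZ, rfl⟩ _ ⟨W, hW, rfl⟩
      rw [hop_star]
      exact hop_comm (hcomm Z hZ W hW).inv_right)
  have hnorm {c : C} {Z : K ≃ₗᵢ[ℂ] K} (h : π c = op Z) : ‖c‖ ≤ 1 := by
    rw [← hπ, h]
    exact Z.toLinearIsometry.norm_toContinuousLinearMap_le
  obtain ⟨x, hx⟩ := hC ⟨X, by simp, rfl⟩
  obtain ⟨y, hy⟩ := hC ⟨Y, by simp, rfl⟩
  exact ⟨C, _, π, x, y, DFunLike.congr_fun hx, DFunLike.congr_fun hy, hnorm hx, hnorm hy⟩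

lemma IsUnitaryDilation.norm_sq_sum_smul_le [CompleteSpace K] {ι σ : Type*} [Fintype ι] [Fintype σ]
    (hD : IsUnitaryDilation S T X Y V N) {u : σ → H} {z : σ → ℂ × ℂ} (hz : ∀ x, z x ∈ Bidisk)
    (hS : ∀ x, S (u x) = (z x).1 • u x) (hT : ∀ x, T (u x) = (z x).2 • u x) {ψ : ι → ℂ × ℂ → ℂ}
    (hψ : ∀ i, DifferentiableOn ℂ (ψ i) Bidisk) {M : ℝ} (hM : ∀ w ∈ Bidisk, ∑ i, ‖ψ i w‖ ^ 2 ≤ M)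
    {r : ℂ} (hr : ‖r‖ < 1) (a : ι → σ → ℂ) :
    ‖∑ i, ∑ x, (ψ i (r • z x) * a i x) • u x‖ ^ 2 ≤ M * ∑ i, ‖∑ x, a i x • u x‖ ^ 2 := by
  have hM0 : 0 ≤ M := (by positivity : 0 ≤ ∑ i, ‖ψ i 0‖ ^ 2).trans (hM 0 (by simp [Bidisk]))
  obtain ⟨C, _, π, x, y, hx, hy, hx1, hy1⟩ := exists_commCStarAlgebra_of_commute_unitary hD.commute
  have hπ : Continuous π := AddMonoidHomClass.continuous_of_bound π 1 fun c => by
    simpa using NonUnitalStarAlgHom.norm_apply_le π c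
  obtain ⟨q, hqQ, hqχ, hqz⟩ := exists_row_mem_of_differentiableOn_bidisk
    (isClosed_compressionAlgebra (π := π.toAlgHom) hπ hD.isClosed fun x => V (u x)) hx1 hy1 hz
    ⟨fun n hn => by simpa [hx] using hD.map_left_mem n hn,
      fun p => by simpa [hx, hS] using hD.sub_left_mem (u p)⟩
    ⟨fun n hn => by simpa [hy] using hD.map_right_mem n hn,
      fun p => by simpa [hy, hT] using hD.sub_right_mem (u p)⟩ hr hψ hM
  have hmem : ∑ i, π (q i).1 (V (∑ x, a i x • u x)) -
      V (∑ i, ∑ x, (ψ i (r • z x) * a i x) • u x) ∈ N := by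
    have : ∑ i, ∑ x, a i x • (π (q i).1 (V (u x)) - (q i).2 x • V (u x)) ∈ N :=
      N.sum_mem fun i _ => N.sum_mem fun x _ => N.smul_mem _ ((hqQ i).2 x)
    simpa [hqz, smul_sub, smul_smul, mul_comm] using this
  calc ‖∑ i, ∑ x, (ψ i (r • z x) * a i x) • u x‖ ^ 2
      ≤ ‖∑ i, π (q i).1 (V (∑ x, a i x • u x))‖ ^ 2 := by
        gcongr
        exact hD.norm_le_of_sub_mem hmem
    _ ≤ M * ∑ i, ‖V (∑ x, a i x • u x)‖ ^ 2 := norm_sum_starAlgHom_apply_sq_le π hM0 hqχ _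
    _ = M * ∑ i, ‖∑ x, a i x • u x‖ ^ 2 := by simp only [V.norm_map]

end VonNeumannInequality

section RowInequality

open Filter

lemma tendsto_pow_apply_of_eigenvectors {H σ : Type*} [NormedAddCommGroup H] [NormedSpace ℂ H]
    {u : σ → H} (hu : Submodule.span ℂ (Set.range u) = ⊤) {A : H →L[ℂ] H} {a : σ → ℂ}
    (hA : ∀ x, A (u x) = a x • u x) (ha : ∀ x, ‖a x‖ < 1) (h : H) :
    Tendsto (fun n => (A ^ n) h) atTop (𝓝 0) := by
  have hpow (x) (n : ℕ) : (A ^ n) (u x) = a x ^ n • u x := by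
    induction n with
    | zero => simp
    | succ n ih => rw [pow_succ', mul_apply_eq_comp, ih, map_smul, hA, smul_smul, pow_succ]
  refine Submodule.span_induction (p := fun h _ => Tendsto (fun n => (A ^ n) h) atTop (𝓝 0))
    ?_ ?_ ?_ ?_ (hu.ge (Submodule.mem_top (x := h)))
  · rintro _ ⟨x, rfl⟩
    simpa [hpow] using (tendsto_pow_atTop_nhds_zero_of_norm_lt_one (ha x)).smul_const (u x)
  · simp
  · intro g h _ _ hg hh
    simpa using hg.add hh
  · intro c h _ hh
    simpa using hh.const_smul c

lemma commute_of_eigenvectors {H σ : Type*} [NormedAddCommGroup H] [NormedSpace ℂ H]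
    {u : σ → H} (hu : Submodule.span ℂ (Set.range u) = ⊤) {A B : H →L[ℂ] H} {a b : σ → ℂ}
    (hA : ∀ x, A (u x) = a x • u x) (hB : ∀ x, B (u x) = b x • u x) : Commute A B :=
  ContinuousLinearMap.coe_injective <| LinearMap.ext_on_range hu fun x => by
    simp [hA, hB, smul_smul, mul_comm]

variable {ι : Type*} [Fintype ι] {ψ : ι → ℂ × ℂ → ℂ} {M : ℝ}

lemma tendsto_sum_smul_of_continuousOn {σ H : Type*} [Fintype σ] [NormedAddCommGroup H]
    [NormedSpace ℂ H] (hψ : ∀ i, ContinuousOn (ψ i) Bidisk) {z : σ → ℂ × ℂ}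
    (hz : ∀ x, z x ∈ Bidisk) (u : σ → H) (a : ι → σ → ℂ) :
    Tendsto (fun r : ℂ => ∑ i, ∑ x, (ψ i (r • z x) * a i x) • u x) (𝓝 1)
      (𝓝 (∑ i, ∑ x, (ψ i (z x) * a i x) • u x)) := by
  refine tendsto_finsetSum _ fun i _ => tendsto_finsetSum _ fun x _ => ?_
  have hψx : ContinuousAt (ψ i) (z x) := (hψ i).continuousAt (isOpen_bidisk.mem_nhds (hz x))
  have hsmul : Tendsto (fun r : ℂ => r • z x) (𝓝 1) (𝓝 (z x)) := by
    simpa using (tendsto_id (x := 𝓝 (1 : ℂ))).smul_const (z x)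
  exact ((hψx.tendsto.comp hsmul).mul_const (a i x)).smul_const (u x)

variable {σ H : Type*} [Fintype σ] [NormedAddCommGroup H]
  [InnerProductSpace ℂ H] (hψ : ∀ i, DifferentiableOn ℂ (ψ i) Bidisk)
  (hM : ∀ w ∈ Bidisk, ∑ i, ‖ψ i w‖ ^ 2 ≤ M) {u : σ → H} {z : σ → ℂ × ℂ} (hz : ∀ x, z x ∈ Bidisk)

include hψ hM hz

lemma norm_sq_sum_smul_le_of_commuting_contractions [FiniteDimensional ℂ H]
    (hu : Submodule.span ℂ (Set.range u) = ⊤) {S T : H →L[ℂ] H} (hS1 : ‖S‖ ≤ 1) (hT1 : ‖T‖ ≤ 1)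
    (hS : ∀ x, S (u x) = (z x).1 • u x) (hT : ∀ x, T (u x) = (z x).2 • u x) (a : ι → σ → ℂ) :
    ‖∑ i, ∑ x, (ψ i (z x) * a i x) • u x‖ ^ 2 ≤ M * ∑ i, ‖∑ x, a i x • u x‖ ^ 2 := by
  have hST (x) : (S * T) (u x) = ((z x).2 * (z x).1) • u x := by
    rw [mul_apply_eq_comp, hT, map_smul, hS, smul_smul]
  obtain ⟨K, _, _, _, X, Y, V, N, hD⟩ := exists_isUnitaryDilation hS1 hT1
    (commute_of_eigenvectors hu hS hT) (tendsto_pow_apply_of_eigenvectors hu hST fun x => by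
      rw [norm_mul]
      exact mul_lt_one_of_nonneg_of_lt_one_left (norm_nonneg _) (hz x).2 (hz x).1.le)
  have : (𝓝[Metric.ball 0 1] (1 : ℂ)).NeBot := by
    rw [← mem_closure_iff_nhdsWithin_neBot, closure_ball _ one_ne_zero]
    simp
  have hlim := tendsto_sum_smul_of_continuousOn (fun i => (hψ i).continuousOn) hz u a
  refine le_of_tendsto ((hlim.mono_left (nhdsWithin_le_nhds (s := Metric.ball 0 1))).norm.pow 2)
    (eventually_mem_nhdsWithin.mono fun r hr => ?_)
  exact hD.norm_sq_sum_smul_le hz hS hT hψ hM (mem_ball_zero_iff.1 hr) a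

theorem norm_sq_sum_smul_le_of_posSemidef
    (hu₁ : (gram ℂ u - gram ℂ fun x => (z x).1 • u x).PosSemidef)
    (hu₂ : (gram ℂ u - gram ℂ fun x => (z x).2 • u x).PosSemidef) (a : ι → σ → ℂ) :
    ‖∑ i, ∑ x, (ψ i (z x) * a i x) • u x‖ ^ 2 ≤ M * ∑ i, ‖∑ x, a i x • u x‖ ^ 2 := by
  let E := Submodule.span ℂ (Set.range u)
  have : FiniteDimensional ℂ E := FiniteDimensional.span_of_finite ℂ (Set.finite_range u)
  have := FiniteDimensional.complete ℂ E
  let v (x : σ) : E := ⟨u x, Submodule.subset_span ⟨x, rfl⟩⟩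
  have hv : Submodule.span ℂ (Set.range v) = ⊤ := by
    refine Submodule.map_injective_of_injective E.injective_subtype ?_
    rw [Submodule.map_span, Submodule.map_subtype_top, ← Set.range_comp]
    rfl
  obtain ⟨S, hS1, hS⟩ := exists_contraction_of_posSemidef_gram_sub_gram (f := v)
    (g := fun x => (z x).1 • v x) hu₁
  obtain ⟨T, hT1, hT⟩ := exists_contraction_of_posSemidef_gram_sub_gram (f := v)
    (g := fun x => (z x).2 • v x) hu₂
  have := norm_sq_sum_smul_le_of_commuting_contractions hψ hM hz hv hS1 hT1 hS hT a
  simpa only [Submodule.coe_norm, AddSubmonoidClass.coe_finsetSum, Submodule.coe_smul] using this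

end RowInequality

section ToeplitzCorona

variable {ι : Type*} [Fintype ι] {φ ψ : ι → ℂ × ℂ → ℂ} {δ : ℝ}

lemma norm_linearCombination_le_of_row {H : Type*} [NormedAddCommGroup H] [InnerProductSpace ℂ H]
    (hδ : 0 < δ) (hψ : ∀ i, DifferentiableOn ℂ (ψ i) Bidisk)
    (hψφ : ∀ z ∈ Bidisk, ∑ i, ψ i z * φ i z = 1) (hψδ : ∀ z ∈ Bidisk, ∑ i, ‖ψ i z‖ ^ 2 ≤ 1 / δ)
    {u : Bidisk → H} (hu₁ : (gram ℂ u - gram ℂ fun z : Bidisk => z.1.1 • u z).PosSemidef)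
    (hu₂ : (gram ℂ u - gram ℂ fun z : Bidisk => z.1.2 • u z).PosSemidef) (c : Bidisk →₀ ℂ) :
    ‖Finsupp.linearCombination ℂ (fun z => (√δ : ℂ) • u z) c‖ ≤
      ‖Finsupp.linearCombination ℂ
        (fun z : Bidisk => WithLp.toLp 2 fun i => φ i z • u z) c‖ := by
  have hrow := norm_sq_sum_smul_le_of_posSemidef hψ hψδ (u := fun x : c.support => u x)
    (z := fun x => x.1.1) (fun x => x.1.2) (hu₁.submatrix Subtype.val) (hu₂.submatrix Subtype.val)
    fun i x => φ i x.1 * c x.1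
  have hleft : ∑ i, ∑ x : c.support, (ψ i x.1 * (φ i x.1 * c x.1)) • u x =
      Finsupp.linearCombination ℂ u c := by
    rw [Finset.sum_comm, Finsupp.linearCombination_apply, Finsupp.sum,
      ← Finset.sum_coe_sort c.support]
    refine Finset.sum_congr rfl fun x _ => ?_
    simp only [← mul_assoc]
    rw [← Finset.sum_smul, ← Finset.sum_mul, hψφ _ x.1.2, one_mul]
  have hright (i) : ∑ x : c.support, (φ i x.1 * c x.1) • u x =
      (Finsupp.linearCombination ℂ
        (fun z : Bidisk => WithLp.toLp 2 fun i => φ i z • u z) c) i := by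
    rw [Finsupp.linearCombination_apply, Finsupp.sum, ← Finset.sum_coe_sort c.support,
      WithLp.ofLp_sum, Finset.sum_apply]
    exact Finset.sum_congr rfl fun x _ => by simp [smul_smul, mul_comm]
  have hscale : Finsupp.linearCombination ℂ (fun z => (√δ : ℂ) • u z) c =
      (√δ : ℂ) • Finsupp.linearCombination ℂ u c := by
    simp only [Finsupp.linearCombination_apply, Finsupp.sum, Finset.smul_sum, smul_comm (c _)]
  simp only [hleft, hright] at hrow
  refine le_of_sq_le_sq ?_ (norm_nonneg _)
  rw [hscale, norm_smul, mul_pow, Complex.norm_real, Real.norm_of_nonneg (Real.sqrt_nonneg δ),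
    Real.sq_sqrt hδ.le, PiLp.norm_sq_eq_of_L2]
  rwa [one_div_mul_eq_div, le_div_iff₀' hδ] at hrow

lemma gram_toLp_sub_gram_eq {H : Type*} [NormedAddCommGroup H] [InnerProductSpace ℂ H]
    {k : Matrix Bidisk Bidisk ℂ} {u : Bidisk → H} (hδ : 0 ≤ δ) (hu : gram ℂ u = kᵀ) :
    gram ℂ (fun z : Bidisk => WithLp.toLp 2 fun i => φ i z • u z) -
        gram ℂ (fun z => (√δ : ℂ) • u z) =
      ((Matrix.of fun x y : Bidisk => ∑ i, φ i x * conj (φ i y) - (δ : ℂ)) ⊙ k)ᵀ := by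
  ext x y
  have hk : ⟪u x, u y⟫_ℂ = k y x := congrArg (· x y) hu
  have hsqrt : (√δ : ℂ) * √δ = δ := by rw [← Complex.ofReal_mul, Real.mul_self_sqrt hδ]
  simp only [Matrix.sub_apply, Matrix.gram_apply, PiLp.inner_apply, inner_smul_left,
    inner_smul_right, hk, Complex.conj_ofReal, Matrix.transpose_apply, Matrix.hadamard_apply,
    Matrix.of_apply, sub_mul, Finset.sum_mul, ← hsqrt, mul_assoc]

lemma gram_sub_gram_smul_eq {X H : Type*} [NormedAddCommGroup H] [InnerProductSpace ℂ H]
    {k : Matrix X X ℂ} {u : X → H} (hu : gram ℂ u = kᵀ) (a : X → ℂ) :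
    gram ℂ u - gram ℂ (fun x => a x • u x) =
      ((Matrix.of fun x y => 1 - a x * conj (a y)) ⊙ k)ᵀ := by
  ext x y
  have hk : ⟪u x, u y⟫_ℂ = k y x := congrArg (· x y) hu
  simp only [Matrix.sub_apply, Matrix.gram_apply, inner_smul_left, inner_smul_right, hk,
    Matrix.transpose_apply, Matrix.hadamard_apply, Matrix.of_apply]
  ring

theorem isPSDKernel_of_row (hδ : 0 < δ) (hψ : ∀ i, DifferentiableOn ℂ (ψ i) Bidisk)
    (hψφ : ∀ z ∈ Bidisk, ∑ i, ψ i z * φ i z = 1) (hψδ : ∀ z ∈ Bidisk, ∑ i, ‖ψ i z‖ ^ 2 ≤ 1 / δ)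
    {k : ℂ × ℂ → ℂ × ℂ → ℂ} (hk : IsAdmissibleKernel k) :
    IsPSDKernel fun x y => (∑ i, φ i x * conj (φ i y) - (δ : ℂ)) * k x y := by
  rw [IsAdmissibleKernel, isPSDKernel_iff_posSemidef, isPSDKernel_iff_posSemidef,
    isPSDKernel_iff_posSemidef] at hk
  obtain ⟨hk₀, hk₁, hk₂⟩ := hk
  obtain ⟨H, _, _, _, u, hu⟩ := exists_gram_eq hk₀.transpose
  rw [isPSDKernel_iff_posSemidef, ← Matrix.posSemidef_transpose_iff]
  have hgram := gram_toLp_sub_gram_eq (φ := φ) hδ.le hu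
  refine hgram ▸ posSemidef_gram_sub_gram_iff.2 ?_
  refine norm_linearCombination_le_of_row hδ hψ hψφ hψδ ?_ ?_
  · rw [gram_sub_gram_smul_eq hu]
    exact hk₁.transpose
  · rw [gram_sub_gram_smul_eq hu]
    exact hk₂.transpose

theorem toeplitz_corona_bidisk_general {ι : Type*} [Fintype ι] (φ : ι → ℂ × ℂ → ℂ) {δ : ℝ}
    (hδ : 0 < δ) :
    (∀ k : ℂ × ℂ → ℂ × ℂ → ℂ, IsAdmissibleKernel k →
      IsPSDKernel fun x y => (∑ i, φ i x * conj (φ i y) - (δ : ℂ)) * k x y) ↔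
    ∃ ψ : ι → ℂ × ℂ → ℂ,
      (∀ i, DifferentiableOn ℂ (ψ i) Bidisk) ∧
      (∀ z ∈ Bidisk, ∑ i, ψ i z * φ i z = 1) ∧
      ∀ z ∈ Bidisk, ∑ i, ‖ψ i z‖ ^ 2 ≤ 1 / δ := by
  refine ⟨fun h => ?_, ?_⟩
  · obtain ⟨G, hG, hsum⟩ := exists_agler_decomposition (fun x y => by simp [mul_comm]) h
    exact exists_differentiableOn_row_of_agler_decomposition hδ hG hsum
  · rintro ⟨ψ, hψ, hψφ, hψδ⟩ k hk
    exact isPSDKernel_of_row hδ hψ hψφ hψδ hk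

end ToeplitzCorona

/-- **Toeplitz-corona theorem on the bidisk.** For bounded analytic `φ₁, …, φ_N` on `𝔻²`
and `δ > 0`, the kernel `(ζ,λ) ↦ [∑ᵢ φᵢ(ζ)φᵢ(λ)~ - δ] k(ζ,λ)` is positive semi-definite
for every admissible kernel `k` if and only if there are analytic `ψ₁, …, ψ_N` on `𝔻²`
with `∑ᵢ ψᵢφᵢ = 1` and `sup_{𝔻²} ∑ᵢ |ψᵢ|² ≤ 1/δ`. -/
theorem toeplitz_corona_bidisk {N : ℕ} (φ : Fin N → ℂ × ℂ → ℂ)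
    (hφ : ∀ i, DifferentiableOn ℂ (φ i) Bidisk)
    (hφb : ∀ i, ∃ C : ℝ, ∀ z ∈ Bidisk, ‖φ i z‖ ≤ C)
    (δ : ℝ) (hδ : 0 < δ) :
    (∀ k : ℂ × ℂ → ℂ × ℂ → ℂ, IsAdmissibleKernel k →
      IsPSDKernel (fun zeta lam =>
        ((∑ i, φ i zeta * starRingEnd ℂ (φ i lam)) - (δ : ℂ)) * k zeta lam)) ↔
    ∃ ψ : Fin N → ℂ × ℂ → ℂ,
      (∀ i, DifferentiableOn ℂ (ψ i) Bidisk) ∧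
      (∀ z ∈ Bidisk, ∑ i, ψ i z * φ i z = 1) ∧
      (∀ z ∈ Bidisk, ∑ i, ‖ψ i z‖ ^ 2 ≤ 1 / δ) := by
  exact toeplitz_corona_bidisk_general φ hδ
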